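/- arXiv:1903.07192 — 2 statements merged into one kernel-verified Lean document; each statement's English description precedes it below -/
import Mathlib

section
/- Fix ρ ∈ (0,1), ν ∈ ℝ, and assume (ρ, ν) ≠ (1/√2, π/2 + nπ) for every integer n. Then for every natural number r, the rescaled moments of the quantum walk converge: lim_{t→∞} Σ_{x ∈ ℤ} (x/t)^r · P(X_t = x) = ∫_{−h*}^{h*} x^r (√(η₊(x)) + √(η₋(x))) · γ(x) / (2π(1−x²)√(ξ(x))) dx. -/
open Real Filter Topology MeasureTheory

noncomputable section

/-- `ρ₀ = √(1-ρ²)`. -/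
def rz (ρ : ℝ) : ℝ := Real.sqrt (1 - ρ ^ 2)

/-- `α₀ = ρ e^{iν}`. -/
def az (ρ ν : ℝ) : ℂ := (ρ : ℂ) * Complex.exp (Complex.I * (ν : ℂ))

/-- `B₋`. -/
def Bm (ρ ν : ℝ) : Matrix (Fin 2) (Fin 2) ℂ :=
  !![0, 0; ((rz ρ) ^ 2 : ℝ), ((rz ρ : ℝ) : ℂ) * (starRingEnd ℂ) (az ρ ν)]

/-- `B₀`. -/
def B0 (ρ ν : ℝ) : Matrix (Fin 2) (Fin 2) ℂ :=
  !![-(az ρ ν) * ((rz ρ : ℝ) : ℂ), -((ρ ^ 2 : ℝ) : ℂ);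
      -((ρ ^ 2 : ℝ) : ℂ), ((rz ρ : ℝ) : ℂ) * (starRingEnd ℂ) (az ρ ν)]

/-- `B₊`. -/
def Bp (ρ ν : ℝ) : Matrix (Fin 2) (Fin 2) ℂ :=
  !![-(az ρ ν) * ((rz ρ : ℝ) : ℂ), (((rz ρ) ^ 2 : ℝ) : ℂ); 0, 0]

/-- The quantum walk `Ψ_t : ℤ → ℂ²`. -/
def qwalk (ρ ν : ℝ) (α β : ℂ) : ℕ → ℤ → Fin 2 → ℂ
  | 0, x => if x = 0 then ![α, β] else 0
  | t + 1, x =>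
      (Bm ρ ν).mulVec (qwalk ρ ν α β t (x + 1)) + (B0 ρ ν).mulVec (qwalk ρ ν α β t x)
        + (Bp ρ ν).mulVec (qwalk ρ ν α β t (x - 1))

/-- `P(X_t = x) = ‖Ψ_t(x)‖²`. -/
def qprob (ρ ν : ℝ) (α β : ℂ) (t : ℕ) (x : ℤ) : ℝ :=
  ‖qwalk ρ ν α β t x 0‖ ^ 2 + ‖qwalk ρ ν α β t x 1‖ ^ 2

/-- `ξ(x) = (ρ²−x²)(ρ₀²−x²) − ρ²ρ₀²(cos²ν)x²`. -/
def xif (ρ ν x : ℝ) : ℝ :=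
  (ρ ^ 2 - x ^ 2) * ((rz ρ) ^ 2 - x ^ 2) - ρ ^ 2 * (rz ρ) ^ 2 * (Real.cos ν) ^ 2 * x ^ 2

/-- `η₊(x)`. -/
def etaP (ρ ν x : ℝ) : ℝ :=
  1 - ρ ^ 2 * (rz ρ) ^ 2 * (1 + (Real.sin ν) ^ 2)
    - (1 - ρ ^ 2 * (rz ρ) ^ 2 * (Real.cos ν) ^ 2) * x ^ 2
    + 2 * ρ * rz ρ * Real.sin ν * Real.sqrt (xif ρ ν x)

/-- `η₋(x)`. -/
def etaM (ρ ν x : ℝ) : ℝ :=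
  1 - ρ ^ 2 * (rz ρ) ^ 2 * (1 + (Real.sin ν) ^ 2)
    - (1 - ρ ^ 2 * (rz ρ) ^ 2 * (Real.cos ν) ^ 2) * x ^ 2
    - 2 * ρ * rz ρ * Real.sin ν * Real.sqrt (xif ρ ν x)

/-- `γ(x)`. -/
def gam (ρ ν : ℝ) (α β : ℂ) (x : ℝ) : ℝ :=
  1 + (‖α‖ ^ 2 - ‖β‖ ^ 2
    - (2 * rz ρ / ρ) * ((α * (starRingEnd ℂ) β).re * Real.cos ν
        - (α * (starRingEnd ℂ) β).im * Real.sin ν)) * x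

/-- `h*`. -/
def hstar (ρ ν : ℝ) : ℝ :=
  (1 / 2) * (Real.sqrt ((1 + ρ * rz ρ) ^ 2 - ρ ^ 2 * (rz ρ) ^ 2 * (Real.sin ν) ^ 2)
    - Real.sqrt ((1 - ρ * rz ρ) ^ 2 - ρ ^ 2 * (rz ρ) ^ 2 * (Real.sin ν) ^ 2))


def cc (m q u : ℝ) : ℝ := m * (Real.sin u - q)
def SS (m q u : ℝ) : ℝ := Real.sqrt (1 - cc m q u ^ 2)
def vv (m q u : ℝ) : ℝ := m * Real.cos u / SS m q u
def DD (m q u : ℝ) : ℝ := cc m q u * vv m q u ^ 2 - m * Real.sin u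

structure Par (m q : ℝ) : Prop where
  m0 : 0 < m
  m2 : m ≤ 1 / 2
  q1 : |q| ≤ 1
  mq : m * (1 + |q|) < 1

lemma cc_lt {m q : ℝ} (P : Par m q) (u : ℝ) : |cc m q u| < 1 := by
  refine lt_of_le_of_lt ?_ P.mq
  unfold cc
  rw [abs_mul, abs_of_pos P.m0]
  refine mul_le_mul_of_nonneg_left ?_ P.m0.le
  exact (abs_sub _ _).trans (by linarith [Real.abs_sin_le_one u])

lemma cc_sq_lt {m q : ℝ} (P : Par m q) (u : ℝ) : cc m q u ^ 2 < 1 := by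
  have := cc_lt P u
  rw [← sq_abs]; nlinarith [abs_nonneg (cc m q u)]

lemma SS_pos {m q : ℝ} (P : Par m q) (u : ℝ) : 0 < SS m q u :=
  Real.sqrt_pos.2 (by linarith [cc_sq_lt P u])

lemma SS_sq {m q : ℝ} (P : Par m q) (u : ℝ) : SS m q u ^ 2 = 1 - cc m q u ^ 2 :=
  Real.sq_sqrt (by linarith [cc_sq_lt P u])

lemma vv_mul {m q : ℝ} (P : Par m q) (u : ℝ) : vv m q u * SS m q u = m * Real.cos u :=
  div_mul_cancel₀ _ (SS_pos P u).ne'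

lemma vv_sq_mul {m q : ℝ} (P : Par m q) (u : ℝ) :
    vv m q u ^ 2 * (1 - cc m q u ^ 2) = m ^ 2 * (1 - Real.sin u ^ 2) := by
  rw [← SS_sq P, ← mul_pow, vv_mul P, ← Real.cos_sq']; ring

lemma vv_sq_le {m q : ℝ} (P : Par m q) (u : ℝ) : vv m q u ^ 2 ≤ m := by
  have h1 := vv_sq_mul P u
  have h2 := cc_sq_lt P u
  have hs := Real.abs_sin_le_one u
  have key : m * (1 - Real.sin u ^ 2) ≤ 1 - cc m q u ^ 2 := by
    have h3 : |cc m q u| ≤ m * (1 + |Real.sin u|) := by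
      unfold cc
      rw [abs_mul, abs_of_pos P.m0]
      exact mul_le_mul_of_nonneg_left ((abs_sub _ _).trans (by linarith [P.q1])) P.m0.le
    have h4 : cc m q u ^ 2 ≤ (m * (1 + |Real.sin u|)) ^ 2 := by
      rw [← sq_abs]; exact pow_le_pow_left₀ (abs_nonneg _) h3 2
    rw [← sq_abs (Real.sin u)]
    have h0 := abs_nonneg (Real.sin u)
    set s := |Real.sin u|
    have m0 := P.m0
    have m2 := P.m2
    have h5 : (m * (1 + s)) ^ 2 ≤ (1 / 2 * (1 + s)) ^ 2 := by gcongr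
    have h6 : m * (1 - s ^ 2) ≤ 1 / 2 * (1 - s ^ 2) := by
      refine mul_le_mul_of_nonneg_right m2 ?_
      nlinarith
    nlinarith [sq_nonneg (1 - s)]
  by_contra hcon
  push Not at hcon
  nlinarith [P.m0, mul_lt_mul_of_pos_right hcon (sub_pos.2 h2), mul_le_mul_of_nonneg_left key P.m0.le]

lemma DD_sq {m q : ℝ} (P : Par m q) (u : ℝ) :
    DD m q u ^ 2 = (vv m q u ^ 2) ^ 2 - vv m q u ^ 2 * (1 + m ^ 2 * (1 - q ^ 2)) + m ^ 2 := by
  have h := vv_sq_mul P u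
  have hc : cc m q u = m * (Real.sin u - q) := rfl
  unfold DD
  generalize vv m q u ^ 2 = Y at *
  rw [hc] at *
  linear_combination (1 - Y) * h

lemma eta_id {m q : ℝ} (P : Par m q) (u : ℝ) :
    ((1 - vv m q u ^ 2) * SS m q u) ^ 2 = 1 - m ^ 2 * (1 + q ^ 2)
      - (1 - m ^ 2 * (1 - q ^ 2)) * vv m q u ^ 2 - 2 * m * q * DD m q u := by
  have h := vv_sq_mul P u
  have hc : cc m q u = m * (Real.sin u - q) := rfl
  rw [mul_pow, SS_sq P]
  unfold DD
  generalize vv m q u ^ 2 = Y at *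
  rw [hc] at *
  linear_combination (Y - 1) * h

lemma DD_mul {m q : ℝ} (P : Par m q) (u : ℝ) :
    DD m q u * (1 - cc m q u ^ 2) = m * (-m ^ 2 * q * Real.sin u ^ 2
      + (m ^ 2 + m ^ 2 * q ^ 2 - 1) * Real.sin u - m ^ 2 * q) := by
  have h := vv_sq_mul P u
  have hc : cc m q u = m * (Real.sin u - q) := rfl
  unfold DD
  generalize vv m q u ^ 2 = Y at *
  rw [hc] at *
  linear_combination (m * (Real.sin u - q)) * h

lemma hasDerivAt_cc (m q u : ℝ) : HasDerivAt (cc m q) (m * Real.cos u) u := by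
  unfold cc
  exact ((Real.hasDerivAt_sin u).sub_const q).const_mul m

lemma hasDerivAt_vv {m q : ℝ} (P : Par m q) (u : ℝ) :
    HasDerivAt (vv m q) (DD m q u / SS m q u) u := by
  have h1 : HasDerivAt (SS m q) ((-(2 * cc m q u * (m * Real.cos u))) / (2 * SS m q u)) u := by
    have hne : 1 - cc m q u ^ 2 ≠ 0 := by linarith [cc_sq_lt P u]
    have := (((hasDerivAt_cc m q u).fun_pow 2).const_sub 1).sqrt hne
    refine this.congr_deriv ?_
    simp [SS]
  have h2 := ((Real.hasDerivAt_cos u).const_mul m).div h1 (SS_pos P u).ne'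
  refine h2.congr_deriv ?_
  have hS := (SS_pos P u).ne'
  have hv := vv_mul P u
  have : m * Real.cos u = vv m q u * SS m q u := hv.symm
  rw [this]
  unfold DD
  field_simp
  ring

lemma continuous_vv {m q : ℝ} (P : Par m q) : Continuous (vv m q) :=
  continuous_iff_continuousAt.2 fun u => (hasDerivAt_vv P u).continuousAt

/-- the turning point. -/
lemma exists_turn {m q : ℝ} (P : Par m q) : ∃ us ∈ Set.Ioo (-(π / 2)) (π / 2), DD m q us = 0 ∧
    (∀ u ∈ Set.Ico (-(π / 2)) us, 0 < DD m q u) ∧ (∀ u ∈ Set.Ioc us (π / 2), DD m q u < 0) := by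
  let G : ℝ → ℝ := fun s => -m ^ 2 * q * s ^ 2 + (m ^ 2 + m ^ 2 * q ^ 2 - 1) * s - m ^ 2 * q
  have hq := abs_le.1 P.q1
  have m0 := P.m0
  have hp : m * (1 + q) < 1 := lt_of_le_of_lt (mul_le_mul_of_nonneg_left (by linarith [le_abs_self q]) m0.le) P.mq
  have hn : m * (1 - q) < 1 := lt_of_le_of_lt (mul_le_mul_of_nonneg_left (by linarith [neg_abs_le q]) m0.le) P.mq
  have hp0 : 0 ≤ m * (1 + q) := mul_nonneg m0.le (by linarith)
  have hn0 : 0 ≤ m * (1 - q) := mul_nonneg m0.le (by linarith)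
  have hp2 : (m * (1 + q)) ^ 2 < 1 := by nlinarith
  have hn2 : (m * (1 - q)) ^ 2 < 1 := by nlinarith
  have hG1 : G 1 < 0 := by simp only [G]; nlinarith
  have hG2 : 0 < G (-1) := by simp only [G]; nlinarith
  have hanti : ∀ s t, s ∈ Set.Icc (-1:ℝ) 1 → t ∈ Set.Icc (-1:ℝ) 1 → s < t → G t < G s := by
    intro s t hs ht hst
    have : G s - G t = (t - s) * (1 - m ^ 2 - m ^ 2 * q ^ 2 + m ^ 2 * q * (s + t)) := by
      simp only [G]; ring
    have h3 : 0 < 1 - m ^ 2 - m ^ 2 * q ^ 2 + m ^ 2 * q * (s + t) := by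
      have e1 : 0 ≤ (s + t + 2) := by linarith [hs.1, ht.1]
      have e2 : 0 ≤ (2 - (s + t)) := by linarith [hs.2, ht.2]
      nlinarith [mul_nonneg e1 (sub_pos.2 hp2).le, mul_nonneg e2 (sub_pos.2 hn2).le, mul_nonneg e1 (sub_pos.2 hn2).le, mul_nonneg e2 (sub_pos.2 hp2).le]
    have := mul_pos (sub_pos.2 hst) h3
    linarith
  have hGc : Continuous G := by simp only [G]; fun_prop
  obtain ⟨s, hs, hs0⟩ : (0:ℝ) ∈ G '' Set.Ioo (-1) 1 :=
    intermediate_value_Ioo' (by norm_num) hGc.continuousOn ⟨hG1, hG2⟩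
  have hsin : Real.sin (Real.arcsin s) = s := Real.sin_arcsin hs.1.le hs.2.le
  have hsign : ∀ u, DD m q u * (1 - cc m q u ^ 2) = m * G (Real.sin u) := fun u => DD_mul P u
  have hcp : ∀ u, 0 < 1 - cc m q u ^ 2 := fun u => by linarith [cc_sq_lt P u]
  have hmem : Real.arcsin s ∈ Set.Ioo (-(π / 2)) (π / 2) :=
    ⟨Real.neg_pi_div_two_lt_arcsin.2 hs.1, Real.arcsin_lt_pi_div_two.2 hs.2⟩
  refine ⟨Real.arcsin s, hmem, ?_, ?_, ?_⟩
  · have := hsign (Real.arcsin s)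
    rw [hsin, hs0, mul_zero] at this
    exact (mul_eq_zero.1 this).resolve_right (hcp _).ne'
  · intro u hu
    have h1 : Real.sin u < s := by
      rw [← hsin]
      exact Real.sin_lt_sin_of_lt_of_le_pi_div_two hu.1 hmem.2.le hu.2
    have h2 := hanti _ _ ⟨Real.neg_one_le_sin u, Real.sin_le_one u⟩ ⟨hs.1.le, hs.2.le⟩ h1
    rw [hs0] at h2
    have := hsign u
    exact pos_of_mul_pos_left (by rw [this]; exact mul_pos m0 h2) (hcp u).le
  · intro u hu
    have h1 : s < Real.sin u := by
      rw [← hsin]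
      exact Real.sin_lt_sin_of_lt_of_le_pi_div_two hmem.1.le hu.2 hu.1
    have h2 := hanti _ _ ⟨hs.1.le, hs.2.le⟩ ⟨Real.neg_one_le_sin u, Real.sin_le_one u⟩ h1
    rw [hs0] at h2
    have := hsign u
    by_contra hcon
    push Not at hcon
    have h5 := mul_nonneg hcon (hcp u).le
    rw [this] at h5
    nlinarith

/-- generic density functions -/
def xg (m q x : ℝ) : ℝ := (x ^ 2) ^ 2 - x ^ 2 * (1 + m ^ 2 * (1 - q ^ 2)) + m ^ 2
def eg (σ m q x : ℝ) : ℝ := 1 - m ^ 2 * (1 + q ^ 2) - (1 - m ^ 2 * (1 - q ^ 2)) * x ^ 2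
  + σ * (2 * m * q * Real.sqrt (xg m q x))
def hg (m q : ℝ) : ℝ :=
  (1 / 2) * (Real.sqrt ((1 + m) ^ 2 - m ^ 2 * q ^ 2) - Real.sqrt ((1 - m) ^ 2 - m ^ 2 * q ^ 2))

lemma hg_props {m q : ℝ} (P : Par m q) : 0 ≤ hg m q ∧ hg m q ^ 2 ≤ m ∧ xg m q (hg m q) = 0 := by
  have m0 := P.m0
  have m2 := P.m2
  have hq2 : q ^ 2 ≤ 1 := by rw [← sq_abs]; nlinarith [P.q1, abs_nonneg q]
  have hB : 0 ≤ (1 - m) ^ 2 - m ^ 2 * q ^ 2 := by nlinarith [mul_le_mul_of_nonneg_left hq2 (sq_nonneg m)]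
  have hAB : (1 - m) ^ 2 - m ^ 2 * q ^ 2 ≤ (1 + m) ^ 2 - m ^ 2 * q ^ 2 := by nlinarith
  have ha := Real.sq_sqrt (hB.trans hAB)
  have hb := Real.sq_sqrt hB
  have hab := Real.sqrt_le_sqrt hAB
  have hb0 := Real.sqrt_nonneg ((1 - m) ^ 2 - m ^ 2 * q ^ 2)
  unfold hg xg
  set a := Real.sqrt ((1 + m) ^ 2 - m ^ 2 * q ^ 2)
  set b := Real.sqrt ((1 - m) ^ 2 - m ^ 2 * q ^ 2)
  refine ⟨by linarith, ?_, ?_⟩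
  · nlinarith
  · have e1 : (a + b) * (a - b) = 4 * m := by linear_combination ha - hb
    have e2 : a ^ 2 + b ^ 2 = 2 * (1 + m ^ 2 * (1 - q ^ 2)) := by linear_combination ha + hb
    have e3 : 1 + m ^ 2 * (1 - q ^ 2) = (a ^ 2 + b ^ 2) / 2 := by linarith
    have e4 : m = (a + b) * (a - b) / 4 := by linarith
    rw [e3]
    have e5 : m ^ 2 = ((a + b) * (a - b) / 4) ^ 2 := by rw [← e4]
    rw [e5]; ring

lemma vv_turn {m q : ℝ} (P : Par m q) {us : ℝ} (hus : us ∈ Set.Ioo (-(π / 2)) (π / 2))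
    (h0 : DD m q us = 0) : vv m q us = hg m q := by
  obtain ⟨a1, a2, a3⟩ := hg_props P
  have b3 : xg m q (vv m q us) = 0 := by
    have := DD_sq P us
    unfold xg; rw [← this, h0]; norm_num
  have b2 := vv_sq_le P us
  have b1 : 0 < vv m q us := div_pos (mul_pos P.m0 (Real.cos_pos_of_mem_Ioo hus)) (SS_pos P us)
  have : vv m q us ^ 2 = hg m q ^ 2 := by
    unfold xg at a3 b3
    set y := vv m q us ^ 2
    set z := hg m q ^ 2
    by_contra hne
    have h1 : (y - z) * (y + z - (1 + m ^ 2 * (1 - q ^ 2))) = 0 := by linear_combination b3 - a3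
    have h2 := (mul_eq_zero.1 h1).resolve_left (sub_ne_zero.2 hne)
    have h3 : y * z = m ^ 2 := by
      linear_combination y * h2 - b3
    have hy : 0 < y := by positivity
    have hz : 0 ≤ z := sq_nonneg _
    have m0 := P.m0
    have hy' : y = m := by nlinarith
    have hz' : z = m := by
      rw [hy'] at h3
      have : m * z = m * m := by rw [h3]; ring
      exact mul_left_cancel₀ m0.ne' this
    exact hne (hy'.trans hz'.symm)
  exact (pow_left_inj₀ b1.le a1 two_ne_zero).1 this

/-- one branch -/
lemma branch {m q : ℝ} (P : Par m q) (σ : ℝ) (a b : ℝ)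
    (him : vv m q '' Set.Ioo a b = Set.Ioo 0 (hg m q))
    (hinj : Set.InjOn (vv m q) (Set.Ioo a b))
    (hD : ∀ u ∈ Set.Ioo a b, DD m q u ≠ 0 ∧ |DD m q u| = - σ * DD m q u) (hσ : σ ^ 2 = 1)
    (f : ℝ → ℝ) (hf : Continuous f) :
    IntegrableOn (fun x => f x * Real.sqrt (eg σ m q x) / ((1 - x ^ 2) * Real.sqrt (xg m q x)))
      (Set.Ioo 0 (hg m q)) ∧
    ∫ x in Set.Ioo 0 (hg m q),
      f x * Real.sqrt (eg σ m q x) / ((1 - x ^ 2) * Real.sqrt (xg m q x))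
      = ∫ u in Set.Ioo a b, f (vv m q u) := by
  have hder : ∀ u ∈ Set.Ioo a b, HasDerivWithinAt (vv m q) (DD m q u / SS m q u) (Set.Ioo a b) u :=
    fun u _ => (hasDerivAt_vv P u).hasDerivWithinAt
  have hpt : ∀ u ∈ Set.Ioo a b, |DD m q u / SS m q u| • (f (vv m q u) *
      Real.sqrt (eg σ m q (vv m q u)) / ((1 - vv m q u ^ 2) * Real.sqrt (xg m q (vv m q u))))
      = f (vv m q u) := by
    intro u hu
    obtain ⟨h1, h2⟩ := hD u hu
    have hS := SS_pos P u
    have hx : Real.sqrt (xg m q (vv m q u)) = |DD m q u| := by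
      rw [xg, ← DD_sq P, Real.sqrt_sq_eq_abs]
    have hv1 : 0 < 1 - vv m q u ^ 2 := by linarith [vv_sq_le P u, P.m2]
    have he : Real.sqrt (eg σ m q (vv m q u)) = (1 - vv m q u ^ 2) * SS m q u := by
      rw [← Real.sqrt_sq (mul_pos hv1 hS).le, eta_id P, eg, hx, h2]
      congr 1
      linear_combination (-2 * m * q * DD m q u) * hσ
    rw [hx, he, abs_div, abs_of_pos hS, smul_eq_mul]
    have := abs_ne_zero.2 h1
    field_simp
  constructor
  · rw [← him, integrableOn_image_iff_integrableOn_abs_deriv_smul measurableSet_Ioo hder hinj]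
    rw [integrableOn_congr_fun hpt measurableSet_Ioo]
    exact ((hf.comp (continuous_vv P)).continuousOn.integrableOn_Icc).mono_set Set.Ioo_subset_Icc_self
  · rw [← him, integral_image_eq_integral_abs_deriv_smul measurableSet_Ioo hder hinj]
    exact setIntegral_congr_fun measurableSet_Ioo hpt

lemma change_var {m q : ℝ} (P : Par m q) (f : ℝ → ℝ) (hf : Continuous f) :
    IntegrableOn (fun x => f x * (Real.sqrt (eg 1 m q x) + Real.sqrt (eg (-1) m q x))
        / ((1 - x ^ 2) * Real.sqrt (xg m q x))) (Set.Ioo 0 (hg m q)) ∧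
    ∫ x in Set.Ioo 0 (hg m q), f x * (Real.sqrt (eg 1 m q x) + Real.sqrt (eg (-1) m q x))
        / ((1 - x ^ 2) * Real.sqrt (xg m q x))
      = ∫ u in (-(π / 2))..(π / 2), f (vv m q u) := by
  obtain ⟨us, hus, h0, hp, hn⟩ := exists_turn P
  have hvt := vv_turn P hus h0
  have vm : vv m q (-(π / 2)) = 0 := by simp [vv]
  have vp : vv m q (π / 2) = 0 := by simp [vv]
  have hmono : StrictMonoOn (vv m q) (Set.Icc (-(π / 2)) us) := by
    refine strictMonoOn_of_deriv_pos (convex_Icc _ _) (continuous_vv P).continuousOn ?_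
    intro u hu
    rw [interior_Icc] at hu
    rw [(hasDerivAt_vv P u).deriv]
    exact div_pos (hp u ⟨hu.1.le, hu.2⟩) (SS_pos P u)
  have hanti : StrictAntiOn (vv m q) (Set.Icc us (π / 2)) := by
    refine strictAntiOn_of_deriv_neg (convex_Icc _ _) (continuous_vv P).continuousOn ?_
    intro u hu
    rw [interior_Icc] at hu
    rw [(hasDerivAt_vv P u).deriv]
    exact div_neg_of_neg_of_pos (hn u ⟨hu.1, hu.2.le⟩) (SS_pos P u)
  have im1 : vv m q '' Set.Ioo (-(π / 2)) us = Set.Ioo 0 (hg m q) := by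
    apply Set.Subset.antisymm
    · rintro _ ⟨u, hu, rfl⟩
      constructor
      · rw [← vm]; exact hmono ⟨le_rfl, hus.1.le⟩ ⟨hu.1.le, hu.2.le⟩ hu.1
      · rw [← hvt]; exact hmono ⟨hu.1.le, hu.2.le⟩ ⟨hus.1.le, le_rfl⟩ hu.2
    · have := intermediate_value_Ioo hus.1.le (continuous_vv P).continuousOn
      rwa [vm, hvt] at this
  have im2 : vv m q '' Set.Ioo us (π / 2) = Set.Ioo 0 (hg m q) := by
    apply Set.Subset.antisymm
    · rintro _ ⟨u, hu, rfl⟩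
      constructor
      · rw [← vp]; exact hanti ⟨hu.1.le, hu.2.le⟩ ⟨hus.2.le, le_rfl⟩ hu.2
      · rw [← hvt]; exact hanti ⟨le_rfl, hus.2.le⟩ ⟨hu.1.le, hu.2.le⟩ hu.1
    · have := intermediate_value_Ioo' hus.2.le (continuous_vv P).continuousOn
      rwa [vp, hvt] at this
  obtain ⟨i1, e1⟩ := branch P (-1) _ _ im1 (hmono.injOn.mono Set.Ioo_subset_Icc_self)
    (fun u hu => by
      have := hp u ⟨hu.1.le, hu.2⟩
      exact ⟨this.ne', by rw [abs_of_pos this]; ring⟩) (by norm_num) f hf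
  obtain ⟨i2, e2⟩ := branch P 1 _ _ im2 (hanti.injOn.mono Set.Ioo_subset_Icc_self)
    (fun u hu => by
      have := hn u ⟨hu.1, hu.2.le⟩
      exact ⟨this.ne, by rw [abs_of_neg this]; ring⟩) (by norm_num) f hf
  have hsum : (fun x => f x * (Real.sqrt (eg 1 m q x) + Real.sqrt (eg (-1) m q x))
        / ((1 - x ^ 2) * Real.sqrt (xg m q x))) = fun x =>
      f x * Real.sqrt (eg 1 m q x) / ((1 - x ^ 2) * Real.sqrt (xg m q x)) +
      f x * Real.sqrt (eg (-1) m q x) / ((1 - x ^ 2) * Real.sqrt (xg m q x)) := by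
    funext x; ring
  rw [hsum]
  refine ⟨i2.add i1, ?_⟩
  rw [integral_add i2 i1, e1, e2]
  have hc : Continuous fun u => f (vv m q u) := hf.comp (continuous_vv P)
  rw [← intervalIntegral.integral_add_adjacent_intervals
    (hc.intervalIntegrable (-(π / 2)) us) (hc.intervalIntegrable us (π / 2)),
    intervalIntegral.integral_of_le hus.1.le, intervalIntegral.integral_of_le hus.2.le,
    integral_Ioc_eq_integral_Ioo, integral_Ioc_eq_integral_Ioo, add_comm]

/-- full symmetric form -/
lemma change_var_sym {m q : ℝ} (P : Par m q) (f : ℝ → ℝ) (hf : Continuous f) :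
    ∫ x in (-(hg m q))..(hg m q), f x * (Real.sqrt (eg 1 m q x) + Real.sqrt (eg (-1) m q x))
        / ((1 - x ^ 2) * Real.sqrt (xg m q x))
      = ∫ u in (-(π / 2))..(π / 2), (f (vv m q u) + f (-(vv m q u))) := by
  obtain ⟨i1, e1⟩ := change_var P f hf
  obtain ⟨i2, e2⟩ := change_var P (fun x => f (-x)) (hf.comp continuous_neg)
  have h0 := (hg_props P).1
  have hv := continuous_vv P
  have k1 : Continuous fun u => f (vv m q u) := hf.comp hv
  have k2 : Continuous fun u => f (-(vv m q u)) := hf.comp hv.neg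
  rw [intervalIntegral.integral_add (k1.intervalIntegrable _ _)
    (k2.intervalIntegrable _ _), ← e1, ← e2]
  set F := (fun x => f x * (Real.sqrt (eg 1 m q x) + Real.sqrt (eg (-1) m q x))
        / ((1 - x ^ 2) * Real.sqrt (xg m q x))) with hF
  have hFneg : (fun x => f (-x) * (Real.sqrt (eg 1 m q x) + Real.sqrt (eg (-1) m q x))
        / ((1 - x ^ 2) * Real.sqrt (xg m q x))) = fun x => F (-x) := by
    funext x; simp only [hF, eg, xg, neg_sq]
  rw [hFneg] at i2 ⊢
  have j1 : IntervalIntegrable F volume 0 (hg m q) := by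
    rwa [intervalIntegrable_iff_integrableOn_Ioo_of_le h0]
  have j2 : IntervalIntegrable (fun x => F (-x)) volume 0 (hg m q) := by
    rwa [intervalIntegrable_iff_integrableOn_Ioo_of_le h0]
  have j3 : IntervalIntegrable F volume (-(hg m q)) 0 := by
    have := (IntervalIntegrable.iff_comp_neg (f := fun x => F (-x))).1 j2
    simpa using this.symm
  rw [← intervalIntegral.integral_add_adjacent_intervals j3 j1,
    ← integral_Ioc_eq_integral_Ioo, ← integral_Ioc_eq_integral_Ioo,
    ← intervalIntegral.integral_of_le h0, ← intervalIntegral.integral_of_le h0,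
    intervalIntegral.integral_comp_neg, neg_zero, add_comm]
open scoped ContDiff

/-! ### Asymptotic expansion of derivatives -/

def gg (w : ℝ → ℝ) (p : ℝ → ℂ) : ℕ → ℕ → ℝ → ℂ
  | 0, 0 => p
  | 0, _ + 1 => fun _ => 0
  | r + 1, 0 => fun u => Complex.I * deriv (gg w p r 0) u
  | r + 1, j + 1 => fun u => (w u : ℂ) * gg w p r j u + Complex.I * deriv (gg w p r (j + 1)) u

lemma gg_smooth {w : ℝ → ℝ} {p : ℝ → ℂ} (hw : ContDiff ℝ ∞ w) (hp : ContDiff ℝ ∞ p) :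
    ∀ r j, ContDiff ℝ ∞ (gg w p r j) := by
  have hw' : ContDiff ℝ ∞ fun u => (w u : ℂ) := Complex.ofRealCLM.contDiff.comp hw
  intro r
  induction r with
  | zero =>
    intro j
    cases j with
    | zero => exact hp
    | succ j => exact contDiff_const
  | succ r ih =>
    have hd : ∀ j, ContDiff ℝ ∞ (deriv (gg w p r j)) := fun j =>
      ((contDiff_infty_iff_deriv).1 (ih j)).2
    intro j
    cases j with
    | zero => exact contDiff_const.mul (hd 0)
    | succ j => exact (hw'.mul (ih j)).add (contDiff_const.mul (hd (j + 1)))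

lemma gg_zero {w : ℝ → ℝ} {p : ℝ → ℂ} : ∀ r j, r < j → gg w p r j = fun _ => 0 := by
  intro r
  induction r with
  | zero =>
    intro j hj
    cases j with
    | zero => omega
    | succ j => rfl
  | succ r ih =>
    intro j hj
    cases j with
    | zero => omega
    | succ j =>
      funext u
      simp only [gg]
      rw [ih j (by omega), ih (j + 1) (by omega)]
      simp

lemma gg_top {w : ℝ → ℝ} {p : ℝ → ℂ} (r : ℕ) (u : ℝ) : gg w p r r u = (w u : ℂ) ^ r * p u := by
  induction r with
  | zero => simp [gg]
  | succ r ih =>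
    simp only [gg]
    rw [ih, gg_zero r (r + 1) (by omega)]
    simp; ring

def EE (θ w : ℝ → ℝ) (p : ℝ → ℂ) (r t : ℕ) (u : ℝ) : ℂ :=
  Complex.exp (Complex.I * t * (θ u : ℂ)) * ∑ j ∈ Finset.range (r + 1), (t : ℂ) ^ j * gg w p r j u

lemma EE_deriv {θ w : ℝ → ℝ} {p : ℝ → ℂ} (hθ : ∀ u, HasDerivAt θ (-(w u)) u)
    (hw : ContDiff ℝ ∞ w) (hp : ContDiff ℝ ∞ p) (r t : ℕ) (u : ℝ) :
    HasDerivAt (EE θ w p r t) (-Complex.I * EE θ w p (r + 1) t u) u := by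
  have h1 : HasDerivAt (fun u => Complex.exp (Complex.I * t * (θ u : ℂ)))
      (Complex.exp (Complex.I * t * (θ u : ℂ)) * (Complex.I * t * ((-(w u) : ℝ) : ℂ))) u :=
    (((hθ u).ofReal_comp).const_mul (Complex.I * t)).cexp
  have h2 : HasDerivAt (fun u => ∑ j ∈ Finset.range (r + 1), (t : ℂ) ^ j * gg w p r j u)
      (∑ j ∈ Finset.range (r + 1), (t : ℂ) ^ j * deriv (gg w p r j) u) u := by
    refine HasDerivAt.fun_sum fun j _ => ?_
    exact (((gg_smooth hw hp r j).differentiable (by simp)) u).hasDerivAt.const_mul _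
  refine (h1.mul h2).congr_deriv ?_
  have e1 : ∑ j ∈ Finset.range (r + 1 + 1), (t : ℂ) ^ j * gg w p (r + 1) j u
      = t * w u * ∑ j ∈ Finset.range (r + 1), (t : ℂ) ^ j * gg w p r j u
        + Complex.I * ∑ j ∈ Finset.range (r + 1), (t : ℂ) ^ j * deriv (gg w p r j) u := by
    have e2 : ∑ j ∈ Finset.range (r + 1), (t : ℂ) ^ j * deriv (gg w p r j) u
        = ∑ j ∈ Finset.range (r + 1 + 1), (t : ℂ) ^ j * deriv (gg w p r j) u := by
      rw [Finset.sum_range_succ _ (r + 1), gg_zero r (r + 1) (by omega)]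
      simp
    rw [e2, Finset.sum_range_succ', Finset.sum_range_succ' _ (r + 1)]
    simp only [gg, mul_add, Finset.sum_add_distrib, Finset.mul_sum, pow_succ, pow_zero]
    rw [add_assoc]
    congr 1
    · exact Finset.sum_congr rfl fun j _ => by ring
    · congr 1
      · exact Finset.sum_congr rfl fun j _ => by ring
      · ring
  unfold EE
  rw [e1]
  push_cast
  linear_combination ((Complex.exp (Complex.I * t * (θ u : ℂ)) *
    ∑ j ∈ Finset.range (r + 1), (t : ℂ) ^ j * deriv (gg w p r j) u)) * Complex.I_sq

/-! ### Smoothness of basic functions -/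

lemma SS_smooth {m q : ℝ} (P : Par m q) : ContDiff ℝ ∞ (SS m q) := by
  unfold SS
  refine ContDiff.sqrt ?_ fun u => ?_
  · unfold cc; fun_prop
  · have := cc_sq_lt P u; linarith

lemma vv_smooth {m q : ℝ} (P : Par m q) : ContDiff ℝ ∞ (vv m q) := by
  unfold vv
  exact (contDiff_const.mul Real.contDiff_cos).div (SS_smooth P) fun u => (SS_pos P u).ne'

lemma phi_deriv {m q : ℝ} (P : Par m q) (u : ℝ) :
    HasDerivAt (fun u => Real.arccos (cc m q u)) (-(vv m q u)) u := by
  have h := abs_lt.1 (cc_lt P u)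
  refine ((Real.hasDerivAt_arccos h.1.ne' h.2.ne).comp u (hasDerivAt_cc m q u)).congr_deriv ?_
  simp only [vv, SS]; ring

lemma exp_phi {m q : ℝ} (P : Par m q) (u : ℝ) (σ : ℝ) (hσ : σ = 1 ∨ σ = -1) :
    Complex.exp (Complex.I * ((σ * Real.arccos (cc m q u) : ℝ) : ℂ))
      = cc m q u + Complex.I * σ * SS m q u := by
  have h := abs_lt.1 (cc_lt P u)
  rw [mul_comm Complex.I, Complex.exp_mul_I, ← Complex.ofReal_cos, ← Complex.ofReal_sin]
  rcases hσ with rfl | rfl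
  · rw [one_mul, Real.cos_arccos h.1.le h.2.le, Real.sin_arccos]
    simp [SS]; ring
  · rw [neg_one_mul, Real.cos_neg, Real.sin_neg, Real.cos_arccos h.1.le h.2.le, Real.sin_arccos]
    simp [SS]; ring

/-! ### Eigen-decomposition -/

def yy (m ν u : ℝ) : ℝ := m * (Real.cos ν + Real.cos u)
def BB (ρ ν u : ℝ) : ℂ := (ρ ^ 2 : ℝ) - (rz ρ ^ 2 : ℝ) * Complex.exp (-Complex.I * (u + ν))
def BC (ρ ν u : ℝ) : ℂ := (ρ ^ 2 : ℝ) - (rz ρ ^ 2 : ℝ) * Complex.exp (Complex.I * (u + ν))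

def pp (ρ ν : ℝ) (α β : ℂ) (σ : ℝ) (i : Fin 2) (u : ℝ) : ℂ :=
  ![(α + σ * (yy (ρ * rz ρ) ν u * α + BB ρ ν u * β) / SS (ρ * rz ρ) (Real.sin ν) u) / 2,
    (β + σ * (BC ρ ν u * α - yy (ρ * rz ρ) ν u * β) / SS (ρ * rz ρ) (Real.sin ν) u) / 2] i

lemma BC_conj (ρ ν u : ℝ) : (starRingEnd ℂ) (BB ρ ν u) = BC ρ ν u := by
  unfold BB BC
  rw [map_sub, map_mul, ← Complex.exp_conj]
  simp

lemma rz_sq {ρ : ℝ} (hρ : ρ ∈ Set.Ioo (0 : ℝ) 1) : rz ρ ^ 2 = 1 - ρ ^ 2 := by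
  unfold rz
  exact Real.sq_sqrt (by nlinarith [hρ.1, hρ.2])

lemma par_of {ρ ν : ℝ} (hρ : ρ ∈ Set.Ioo (0 : ℝ) 1)
    (hexc : ∀ n : ℤ, ¬(ρ = 1 / Real.sqrt 2 ∧ ν = π / 2 + n * π)) :
    Par (ρ * rz ρ) (Real.sin ν) := by
  have h0 := hρ.1
  have hz := rz_sq hρ
  have hz0 : 0 < rz ρ := Real.sqrt_pos.2 (by nlinarith [hρ.1, hρ.2])
  have hm : ρ * rz ρ ≤ 1 / 2 := by nlinarith [sq_nonneg (ρ - rz ρ)]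
  have hs := Real.abs_sin_le_one ν
  refine ⟨mul_pos h0 hz0, hm, hs, ?_⟩
  by_contra hcon
  push Not at hcon
  have hm0 := mul_pos h0 hz0
  have hs1 : |Real.sin ν| = 1 := by nlinarith [abs_nonneg (Real.sin ν)]
  have hm1 : ρ * rz ρ = 1 / 2 := by rw [hs1] at hcon; linarith
  have heq : ρ = rz ρ := by
    have : (ρ - rz ρ) ^ 2 = 0 := by nlinarith
    have := pow_eq_zero_iff (two_ne_zero) |>.1 this
    linarith
  have hcos : Real.cos ν = 0 := by
    have h1 : Real.sin ν ^ 2 = 1 := by rw [← sq_abs, hs1]; norm_num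
    have := Real.sin_sq_add_cos_sq ν
    exact pow_eq_zero_iff (two_ne_zero) |>.1 (by linarith : Real.cos ν ^ 2 = 0)
  obtain ⟨k, hk⟩ := Real.cos_eq_zero_iff.1 hcos
  refine hexc k ⟨?_, by rw [hk]; ring⟩
  rw [← heq] at hz
  have h2 : ρ ^ 2 = 1 / 2 := by linarith
  have h3 : (1 / Real.sqrt 2) ^ 2 = 1 / 2 := by rw [div_pow, Real.sq_sqrt (by norm_num)]; norm_num
  exact (pow_left_inj₀ h0.le (by positivity) two_ne_zero).1 (h2.trans h3.symm)

lemma exp_pos_form (u : ℝ) : Complex.exp (Complex.I * u) = Real.cos u + Complex.I * Real.sin u := by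
  rw [mul_comm, Complex.exp_mul_I]; push_cast; ring
lemma exp_neg_form (u : ℝ) : Complex.exp (-Complex.I * u) = Real.cos u - Complex.I * Real.sin u := by
  have := exp_pos_form (-u)
  rw [Real.cos_neg, Real.sin_neg] at this
  push_cast at this
  rw [neg_mul, ← mul_neg, this]
  push_cast; ring

lemma yB {ρ ν : ℝ} (hρ : ρ ∈ Set.Ioo (0 : ℝ) 1) (P : Par (ρ * rz ρ) (Real.sin ν)) (u : ℝ) :
    (yy (ρ * rz ρ) ν u : ℂ) ^ 2 + BB ρ ν u * BC ρ ν u = (SS (ρ * rz ρ) (Real.sin ν) u : ℂ) ^ 2 := by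
  have h1 : ((SS (ρ * rz ρ) (Real.sin ν) u : ℂ)) ^ 2
      = ((1 - (ρ * rz ρ * (Real.sin u - Real.sin ν)) ^ 2 : ℝ) : ℂ) := by
    rw [← Complex.ofReal_pow, SS_sq P]; rfl
  have h2 : BB ρ ν u * BC ρ ν u
      = ((ρ ^ 4 + rz ρ ^ 4 - 2 * (ρ * rz ρ) ^ 2 * Real.cos (u + ν) : ℝ) : ℂ) := by
    unfold BB BC
    have a1 := exp_pos_form (u + ν)
    have a2 := exp_neg_form (u + ν)
    have a3 : (Real.cos (u + ν) : ℂ) ^ 2 + (Real.sin (u + ν) : ℂ) ^ 2 = 1 := by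
      exact_mod_cast Real.cos_sq_add_sin_sq (u + ν)
    rw [Complex.ofReal_add] at a1 a2
    rw [a1, a2]
    generalize Real.cos (u + ν) = C at *
    generalize Real.sin (u + ν) = D at *
    push_cast
    linear_combination (rz ρ : ℂ) ^ 4 * a3 - (rz ρ : ℂ) ^ 4 * D ^ 2 * Complex.I_sq
  rw [h1, h2]
  have key : (yy (ρ * rz ρ) ν u) ^ 2 + (ρ ^ 4 + rz ρ ^ 4 - 2 * (ρ * rz ρ) ^ 2 * Real.cos (u + ν))
      = 1 - (ρ * rz ρ * (Real.sin u - Real.sin ν)) ^ 2 := by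
    have hz := rz_sq hρ
    have b1 := Real.sin_sq_add_cos_sq u
    have b2 := Real.sin_sq_add_cos_sq ν
    unfold yy
    rw [Real.cos_add]
    have e : (ρ ^ 2 + rz ρ ^ 2) ^ 2 = 1 := by rw [hz]; ring
    linear_combination (ρ * rz ρ) ^ 2 * b1 + (ρ * rz ρ) ^ 2 * b2 + e
  exact_mod_cast key

/-- the eigenvector equation -/
lemma pp_eig {ρ ν : ℝ} (hρ : ρ ∈ Set.Ioo (0 : ℝ) 1) (P : Par (ρ * rz ρ) (Real.sin ν)) (α β : ℂ)
    (u σ : ℝ) (hσ : σ = 1 ∨ σ = -1) :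
    ((cc (ρ * rz ρ) (Real.sin ν) u : ℂ) + Complex.I * yy (ρ * rz ρ) ν u) * pp ρ ν α β σ 0 u
      + Complex.I * BB ρ ν u * pp ρ ν α β σ 1 u
      = (cc (ρ * rz ρ) (Real.sin ν) u + Complex.I * σ * SS (ρ * rz ρ) (Real.sin ν) u)
        * pp ρ ν α β σ 0 u ∧
    Complex.I * BC ρ ν u * pp ρ ν α β σ 0 u
      + ((cc (ρ * rz ρ) (Real.sin ν) u : ℂ) - Complex.I * yy (ρ * rz ρ) ν u) * pp ρ ν α β σ 1 u
      = (cc (ρ * rz ρ) (Real.sin ν) u + Complex.I * σ * SS (ρ * rz ρ) (Real.sin ν) u)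
        * pp ρ ν α β σ 1 u := by
  have h := yB hρ P u
  have hS : (SS (ρ * rz ρ) (Real.sin ν) u : ℂ) ≠ 0 := by exact_mod_cast (SS_pos P u).ne'
  have hs2 : (σ : ℂ) ^ 2 = 1 := by rcases hσ with rfl | rfl <;> norm_num
  simp only [pp, Matrix.cons_val_zero, Matrix.cons_val_one]
  generalize (SS (ρ * rz ρ) (Real.sin ν) u : ℂ) = S at *
  generalize (yy (ρ * rz ρ) ν u : ℂ) = y at *
  generalize BB ρ ν u = B at *
  generalize BC ρ ν u = B' at *
  generalize (cc (ρ * rz ρ) (Real.sin ν) u : ℂ) = c at *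
  constructor
  · field_simp
    linear_combination Complex.I * σ * α * h - Complex.I * S * (y * α + B * β) * hs2
  · field_simp
    linear_combination Complex.I * σ * β * h - Complex.I * S * (B' * α - y * β) * hs2

lemma pp_orth {ρ ν : ℝ} (hρ : ρ ∈ Set.Ioo (0 : ℝ) 1) (P : Par (ρ * rz ρ) (Real.sin ν)) (α β : ℂ)
    (u σ : ℝ) (hσ : σ = 1 ∨ σ = -1) :
    (starRingEnd ℂ) (pp ρ ν α β σ 0 u) * pp ρ ν α β (-σ) 0 u
     + (starRingEnd ℂ) (pp ρ ν α β σ 1 u) * pp ρ ν α β (-σ) 1 u = 0 := by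
  have h := yB hρ P u
  have hS : (SS (ρ * rz ρ) (Real.sin ν) u : ℂ) ≠ 0 := by exact_mod_cast (SS_pos P u).ne'
  have hs2 : (σ : ℂ) ^ 2 = 1 := by rcases hσ with rfl | rfl <;> norm_num
  have hc := BC_conj ρ ν u
  have hc' : (starRingEnd ℂ) (BC ρ ν u) = BB ρ ν u := by rw [← hc, Complex.conj_conj]
  simp only [pp, Matrix.cons_val_zero, Matrix.cons_val_one, map_add, map_sub, map_mul, map_div₀, hc, hc',
    Complex.conj_ofReal, map_ofNat, Complex.ofReal_neg]
  generalize (SS (ρ * rz ρ) (Real.sin ν) u : ℂ) = S at *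
  generalize (yy (ρ * rz ρ) ν u : ℂ) = y at *
  generalize BB ρ ν u = B at *
  generalize BC ρ ν u = B' at *
  generalize (starRingEnd ℂ) α = α' at *
  generalize (starRingEnd ℂ) β = β' at *
  field_simp
  linear_combination (-(α * α' + β * β')) * h - (α * α' + β * β') * (y ^ 2 + B * B') * hs2

/-- the squared norm of the eigen-component, times S -/
lemma pp_norm {ρ ν : ℝ} (hρ : ρ ∈ Set.Ioo (0 : ℝ) 1) (P : Par (ρ * rz ρ) (Real.sin ν)) (α β : ℂ)
    (hαβ : ‖α‖ ^ 2 + ‖β‖ ^ 2 = 1) (u σ : ℝ) (hσ : σ = 1 ∨ σ = -1) :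
    (starRingEnd ℂ) (pp ρ ν α β σ 0 u) * pp ρ ν α β σ 0 u
     + (starRingEnd ℂ) (pp ρ ν α β σ 1 u) * pp ρ ν α β σ 1 u
     = (1 + σ * (yy (ρ * rz ρ) ν u * ((starRingEnd ℂ) α * α - (starRingEnd ℂ) β * β)
        + (starRingEnd ℂ) α * β * BB ρ ν u + α * (starRingEnd ℂ) β * BC ρ ν u)
        / SS (ρ * rz ρ) (Real.sin ν) u) / 2 := by
  have h := yB hρ P u
  have hn : (starRingEnd ℂ) α * α + (starRingEnd ℂ) β * β = 1 := by
    rw [Complex.conj_mul', Complex.conj_mul']; exact_mod_cast hαβ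
  have hS : (SS (ρ * rz ρ) (Real.sin ν) u : ℂ) ≠ 0 := by exact_mod_cast (SS_pos P u).ne'
  have hs2 : (σ : ℂ) ^ 2 = 1 := by rcases hσ with rfl | rfl <;> norm_num
  have hc := BC_conj ρ ν u
  have hc' : (starRingEnd ℂ) (BC ρ ν u) = BB ρ ν u := by rw [← hc, Complex.conj_conj]
  simp only [pp, Matrix.cons_val_zero, Matrix.cons_val_one, map_add, map_sub, map_mul, map_div₀, hc, hc',
    Complex.conj_ofReal, map_ofNat]
  generalize (SS (ρ * rz ρ) (Real.sin ν) u : ℂ) = S at *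
  generalize (yy (ρ * rz ρ) ν u : ℂ) = y at *
  generalize BB ρ ν u = B at *
  generalize BC ρ ν u = B' at *
  generalize (starRingEnd ℂ) α = α' at *
  generalize (starRingEnd ℂ) β = β' at *
  field_simp
  linear_combination (α * α' + β * β') * h + (α * α' + β * β') * (y ^ 2 + B * B') * hs2 + 2 * S ^ 2 * hn

lemma pp_smooth {ρ ν : ℝ} (P : Par (ρ * rz ρ) (Real.sin ν)) (α β : ℂ) (σ : ℝ) (i : Fin 2) :
    ContDiff ℝ ∞ (pp ρ ν α β σ i) := by
  have hS : ContDiff ℝ ∞ fun u => ((SS (ρ * rz ρ) (Real.sin ν) u : ℂ))⁻¹ := by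
    have h : ContDiff ℝ ∞ fun u => (SS (ρ * rz ρ) (Real.sin ν) u)⁻¹ :=
      (SS_smooth P).inv fun u => (SS_pos P u).ne'
    have h2 : ContDiff ℝ ∞ fun u => (((SS (ρ * rz ρ) (Real.sin ν) u)⁻¹ : ℝ) : ℂ) :=
      Complex.ofRealCLM.contDiff.comp h
    simpa using h2
  have hy : ContDiff ℝ ∞ fun u => (yy (ρ * rz ρ) ν u : ℂ) := by
    have h : ContDiff ℝ ∞ (yy (ρ * rz ρ) ν) := by
      unfold yy; fun_prop
    exact Complex.ofRealCLM.contDiff.comp h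
  have hid : ContDiff ℝ ∞ fun u : ℝ => (u : ℂ) := Complex.ofRealCLM.contDiff
  have hB : ContDiff ℝ ∞ (BB ρ ν) := by
    unfold BB
    exact contDiff_const.sub (contDiff_const.mul ((contDiff_const.mul (hid.add contDiff_const)).cexp))
  have hC : ContDiff ℝ ∞ (BC ρ ν) := by
    unfold BC
    exact contDiff_const.sub (contDiff_const.mul ((contDiff_const.mul (hid.add contDiff_const)).cexp))
  fin_cases i
  · have h : ContDiff ℝ ∞ fun u => (α + σ * (yy (ρ * rz ρ) ν u * α + BB ρ ν u * β)
        * ((SS (ρ * rz ρ) (Real.sin ν) u : ℂ))⁻¹) / 2 :=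
      (contDiff_const.add ((contDiff_const.mul ((hy.mul contDiff_const).add
        (hB.mul contDiff_const))).mul hS)).div_const 2
    exact h
  · have h : ContDiff ℝ ∞ fun u => (β + σ * (BC ρ ν u * α - yy (ρ * rz ρ) ν u * β)
        * ((SS (ρ * rz ρ) (Real.sin ν) u : ℂ))⁻¹) / 2 :=
      (contDiff_const.add ((contDiff_const.mul ((hC.mul contDiff_const).sub
        (hy.mul contDiff_const))).mul hS)).div_const 2
    exact h

/-! ### Fourier transform of the walk -/

lemma qwalk_supp (ρ ν : ℝ) (α β : ℂ) (t : ℕ) : ∀ x : ℤ, (t : ℤ) < |x| → qwalk ρ ν α β t x = 0 := by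
  induction t with
  | zero =>
    intro x hx
    have : x ≠ 0 := by rintro rfl; simp at hx
    simp [qwalk, this]
  | succ t ih =>
    intro x hx
    push_cast at hx
    have h1 : (t : ℤ) < |x + 1| := by grind
    have h2 : (t : ℤ) < |x - 1| := by grind
    have h3 : (t : ℤ) < |x| := by omega
    simp [qwalk, ih _ h1, ih _ h2, ih _ h3]

def ee (ν u : ℝ) (x : ℤ) : ℂ := Complex.exp (-Complex.I * (u + ν) * x)

lemma ee_succ (ν u : ℝ) (x : ℤ) : ee ν u (x + 1) = Complex.exp (-Complex.I * (u + ν)) * ee ν u x := by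
  unfold ee; rw [← Complex.exp_add]; congr 1; push_cast; ring

lemma ee_pred (ν u : ℝ) (x : ℤ) : ee ν u (x - 1) = Complex.exp (Complex.I * (u + ν)) * ee ν u x := by
  unfold ee; rw [← Complex.exp_add]; congr 1; push_cast; ring

lemma hasSum_shift_p {ν u : ℝ} {f : ℤ → ℂ} {A : ℂ} (h : HasSum (fun x => f x * ee ν u x) A) :
    HasSum (fun x => f (x + 1) * ee ν u x) (Complex.exp (Complex.I * (u + ν)) * A) := by
  have := (Equiv.addRight (1 : ℤ)).hasSum_iff.2 (h.mul_left (Complex.exp (Complex.I * (u + ν))))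
  refine this.congr_fun ?_ |> fun h => h
  intro x
  have h1 : ee ν u x = Complex.exp (Complex.I * (u + ν)) * ee ν u (x + 1) := by
    rw [← ee_pred, add_sub_cancel_right]
  simp only [Function.comp, Equiv.coe_addRight]
  rw [h1]; ring

lemma hasSum_shift_m {ν u : ℝ} {f : ℤ → ℂ} {A : ℂ} (h : HasSum (fun x => f x * ee ν u x) A) :
    HasSum (fun x => f (x - 1) * ee ν u x) (Complex.exp (-Complex.I * (u + ν)) * A) := by
  have := (Equiv.subRight (1 : ℤ)).hasSum_iff.2 (h.mul_left (Complex.exp (-Complex.I * (u + ν))))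
  refine this.congr_fun ?_ |> fun h => h
  intro x
  have h1 : ee ν u x = Complex.exp (-Complex.I * (u + ν)) * ee ν u (x - 1) := by
    rw [← ee_succ, sub_add_cancel]
  simp only [Function.comp, Equiv.subRight_apply]
  rw [h1]; ring

def closedF (ρ ν : ℝ) (α β : ℂ) (t : ℕ) (u : ℝ) (i : Fin 2) : ℂ :=
  Complex.I ^ t * (Complex.exp (Complex.I * t * ((1 * Real.arccos (cc (ρ * rz ρ) (Real.sin ν) u) : ℝ) : ℂ)) * pp ρ ν α β 1 i u
   + Complex.exp (Complex.I * t * (((-1) * Real.arccos (cc (ρ * rz ρ) (Real.sin ν) u) : ℝ) : ℂ)) * pp ρ ν α β (-1) i u)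

lemma U00 (ρ ν u : ℝ) : -(az ρ ν) * (rz ρ : ℂ) + Complex.exp (-Complex.I * (u + ν)) * (-(az ρ ν) * (rz ρ : ℂ))
    = Complex.I * ((cc (ρ * rz ρ) (Real.sin ν) u : ℂ) + Complex.I * yy (ρ * rz ρ) ν u) := by
  have e1 : Complex.exp (-Complex.I * (u + ν)) * Complex.exp (Complex.I * ν) = Complex.exp (-Complex.I * u) := by
    rw [← Complex.exp_add]; congr 1; ring
  have e2 := exp_pos_form ν
  have e3 := exp_neg_form u
  unfold az cc yy
  rw [e3] at e1
  push_cast at *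
  linear_combination (-(ρ : ℂ) * rz ρ) * e1 + (-(ρ : ℂ) * rz ρ) * e2 - (ρ : ℂ) * rz ρ * (Complex.cos ν + Complex.cos u) * Complex.I_sq

lemma U11 (ρ ν u : ℝ) : (rz ρ : ℂ) * (starRingEnd ℂ) (az ρ ν)
      + Complex.exp (Complex.I * (u + ν)) * ((rz ρ : ℂ) * (starRingEnd ℂ) (az ρ ν))
    = Complex.I * ((cc (ρ * rz ρ) (Real.sin ν) u : ℂ) - Complex.I * yy (ρ * rz ρ) ν u) := by
  have e0 : (starRingEnd ℂ) (az ρ ν) = ρ * Complex.exp (-Complex.I * ν) := by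
    unfold az; rw [map_mul, ← Complex.exp_conj]; simp
  have e1 : Complex.exp (Complex.I * (u + ν)) * Complex.exp (-Complex.I * ν) = Complex.exp (Complex.I * u) := by
    rw [← Complex.exp_add]; congr 1; ring
  have e2 := exp_neg_form ν
  have e3 := exp_pos_form u
  rw [e0]
  unfold cc yy
  rw [e3] at e1
  push_cast at *
  linear_combination ((ρ : ℂ) * rz ρ) * e1 + ((ρ : ℂ) * rz ρ) * e2 + (ρ : ℂ) * rz ρ * (Complex.cos ν + Complex.cos u) * Complex.I_sq

lemma walk_fourier {ρ ν : ℝ} (hρ : ρ ∈ Set.Ioo (0 : ℝ) 1) (P : Par (ρ * rz ρ) (Real.sin ν)) (α β : ℂ)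
    (u : ℝ) (t : ℕ) : ∀ i, HasSum (fun x => qwalk ρ ν α β t x i * ee ν u x) (closedF ρ ν α β t u i) := by
  induction t with
  | zero =>
    intro i
    have h1 : closedF ρ ν α β 0 u i = qwalk ρ ν α β 0 0 i * ee ν u 0 := by
      fin_cases i <;> simp [closedF, qwalk, pp, ee] <;> ring
    rw [h1]
    refine hasSum_single 0 fun x hx => ?_
    simp [qwalk, hx]
  | succ t ih =>
    have eP := exp_phi P u 1 (Or.inl rfl)
    have eM := exp_phi P u (-1) (Or.inr rfl)
    obtain ⟨p0, p1⟩ := pp_eig hρ P α β u 1 (Or.inl rfl)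
    obtain ⟨m0, m1⟩ := pp_eig hρ P α β u (-1) (Or.inr rfl)
    rw [← eP] at p0 p1
    rw [← eM] at m0 m1
    have hs : ∀ θ : ℂ, Complex.exp (Complex.I * ((t + 1 : ℕ) : ℂ) * θ)
        = Complex.exp (Complex.I * t * θ) * Complex.exp (Complex.I * θ) := by
      intro θ; rw [← Complex.exp_add]; congr 1; push_cast; ring
    have u00 := U00 ρ ν u
    have u11 := U11 ρ ν u
    have hB : BB ρ ν u = (ρ ^ 2 : ℝ) - (rz ρ ^ 2 : ℝ) * Complex.exp (-Complex.I * (u + ν)) := rfl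
    have hC : BC ρ ν u = (ρ ^ 2 : ℝ) - (rz ρ ^ 2 : ℝ) * Complex.exp (Complex.I * (u + ν)) := rfl
    have a0 := ih 0
    have a1 := ih 1
    intro i
    fin_cases i
    · have h1 := (((a0.mul_left (-(az ρ ν) * (rz ρ : ℂ))).add (a1.mul_left (-((ρ ^ 2 : ℝ) : ℂ)))).add
        (((hasSum_shift_m a0).mul_left (-(az ρ ν) * (rz ρ : ℂ))).add
          ((hasSum_shift_m a1).mul_left (((rz ρ) ^ 2 : ℝ) : ℂ))))
      change HasSum (fun x => qwalk ρ ν α β (t + 1) x 0 * ee ν u x) (closedF ρ ν α β (t + 1) u 0)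
      have h2 : HasSum (fun x => qwalk ρ ν α β (t + 1) x 0 * ee ν u x) _ := h1.congr_fun (fun x => by
        simp [qwalk, Matrix.mulVec, dotProduct, Bm, B0, Bp, Fin.sum_univ_two]
        ring)
      convert h2 using 1
      simp only [closedF, hs, pow_succ Complex.I t]
      generalize Complex.exp (Complex.I * ((1 * Real.arccos (cc (ρ * rz ρ) (Real.sin ν) u) : ℝ) : ℂ)) = E1 at *
      generalize Complex.exp (Complex.I * (((-1) * Real.arccos (cc (ρ * rz ρ) (Real.sin ν) u) : ℝ) : ℂ)) = E2 at *
      generalize Complex.exp (Complex.I * t * ((1 * Real.arccos (cc (ρ * rz ρ) (Real.sin ν) u) : ℝ) : ℂ)) = F1 at *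
      generalize Complex.exp (Complex.I * t * (((-1) * Real.arccos (cc (ρ * rz ρ) (Real.sin ν) u) : ℝ) : ℂ)) = F2 at *
      generalize (cc (ρ * rz ρ) (Real.sin ν) u : ℂ) = c at *
      generalize (yy (ρ * rz ρ) ν u : ℂ) = y at *
      change Complex.I ^ t * Complex.I * (F1 * E1 * pp ρ ν α β 1 0 u + F2 * E2 * pp ρ ν α β (-1) 0 u) = _
      linear_combination (-Complex.I ^ t * Complex.I * F1) * p0 + (-Complex.I ^ t * Complex.I * F2) * m0
        - Complex.I ^ t * (F1 * pp ρ ν α β 1 0 u + F2 * pp ρ ν α β (-1) 0 u) * u00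
        + Complex.I ^ t * (F1 * pp ρ ν α β 1 1 u + F2 * pp ρ ν α β (-1) 1 u) *
           (BB ρ ν u * Complex.I_sq - hB)
    · have h1 := (((a0.mul_left (-((ρ ^ 2 : ℝ) : ℂ))).add (a1.mul_left ((rz ρ : ℂ) * (starRingEnd ℂ) (az ρ ν)))).add
        (((hasSum_shift_p a0).mul_left (((rz ρ) ^ 2 : ℝ) : ℂ)).add
          ((hasSum_shift_p a1).mul_left ((rz ρ : ℂ) * (starRingEnd ℂ) (az ρ ν)))))
      change HasSum (fun x => qwalk ρ ν α β (t + 1) x 1 * ee ν u x) (closedF ρ ν α β (t + 1) u 1)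
      have h2 : HasSum (fun x => qwalk ρ ν α β (t + 1) x 1 * ee ν u x) _ := h1.congr_fun (fun x => by
        simp [qwalk, Matrix.mulVec, dotProduct, Bm, B0, Bp, Fin.sum_univ_two]
        ring)
      convert h2 using 1
      simp only [closedF, hs, pow_succ Complex.I t]
      generalize Complex.exp (Complex.I * ((1 * Real.arccos (cc (ρ * rz ρ) (Real.sin ν) u) : ℝ) : ℂ)) = E1 at *
      generalize Complex.exp (Complex.I * (((-1) * Real.arccos (cc (ρ * rz ρ) (Real.sin ν) u) : ℝ) : ℂ)) = E2 at *
      generalize Complex.exp (Complex.I * t * ((1 * Real.arccos (cc (ρ * rz ρ) (Real.sin ν) u) : ℝ) : ℂ)) = F1 at *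
      generalize Complex.exp (Complex.I * t * (((-1) * Real.arccos (cc (ρ * rz ρ) (Real.sin ν) u) : ℝ) : ℂ)) = F2 at *
      generalize (cc (ρ * rz ρ) (Real.sin ν) u : ℂ) = c at *
      generalize (yy (ρ * rz ρ) ν u : ℂ) = y at *
      change Complex.I ^ t * Complex.I * (F1 * E1 * pp ρ ν α β 1 1 u + F2 * E2 * pp ρ ν α β (-1) 1 u) = _
      linear_combination (-Complex.I ^ t * Complex.I * F1) * p1 + (-Complex.I ^ t * Complex.I * F2) * m1
        - Complex.I ^ t * (F1 * pp ρ ν α β 1 1 u + F2 * pp ρ ν α β (-1) 1 u) * u11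
        + Complex.I ^ t * (F1 * pp ρ ν α β 1 0 u + F2 * pp ρ ν α β (-1) 0 u) *
           (BC ρ ν u * Complex.I_sq - hC)

def Fr (ρ ν : ℝ) (α β : ℂ) (r t : ℕ) (i : Fin 2) (u : ℝ) : ℂ :=
  ∑ x ∈ Finset.Icc (-(t : ℤ)) t, ((x : ℂ) ^ r * qwalk ρ ν α β t x i) * ee ν u x

lemma Fr_deriv (ρ ν : ℝ) (α β : ℂ) (r t : ℕ) (i : Fin 2) (u : ℝ) :
    HasDerivAt (Fr ρ ν α β r t i) (-Complex.I * Fr ρ ν α β (r + 1) t i u) u := by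
  have h : ∀ x : ℤ, HasDerivAt (fun u : ℝ => ee ν u x) (ee ν u x * (-Complex.I * x)) u := by
    intro x
    have h0 : HasDerivAt (fun u : ℝ => (u : ℂ)) 1 u := Complex.ofRealCLM.hasDerivAt
    have h1 := (((h0.add_const (ν : ℂ)).const_mul (-Complex.I)).mul_const (x : ℂ)).cexp
    refine h1.congr_deriv ?_
    simp [ee]
  have h2 := HasDerivAt.fun_sum (u := Finset.Icc (-(t : ℤ)) t) fun x _ =>
    (h x).const_mul ((x : ℂ) ^ r * qwalk ρ ν α β t x i)
  refine h2.congr_deriv ?_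
  unfold Fr
  rw [Finset.mul_sum]
  exact Finset.sum_congr rfl fun x _ => by rw [pow_succ]; ring

lemma Fr_eq {ρ ν : ℝ} (hρ : ρ ∈ Set.Ioo (0 : ℝ) 1) (P : Par (ρ * rz ρ) (Real.sin ν)) (α β : ℂ)
    (t : ℕ) (i : Fin 2) (r : ℕ) : ∀ u, Fr ρ ν α β r t i u = Complex.I ^ t *
      (EE (fun u => 1 * Real.arccos (cc (ρ * rz ρ) (Real.sin ν) u))
         (fun u => 1 * vv (ρ * rz ρ) (Real.sin ν) u) (pp ρ ν α β 1 i) r t u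
      + EE (fun u => (-1) * Real.arccos (cc (ρ * rz ρ) (Real.sin ν) u))
         (fun u => (-1) * vv (ρ * rz ρ) (Real.sin ν) u) (pp ρ ν α β (-1) i) r t u) := by
  induction r with
  | zero =>
    intro u
    have h1 := walk_fourier hρ P α β u t i
    have h2 : HasSum (fun x => qwalk ρ ν α β t x i * ee ν u x) (Fr ρ ν α β 0 t i u) := by
      unfold Fr
      simp only [pow_zero, one_mul]
      refine hasSum_sum_of_ne_finset_zero fun x hx => ?_
      rw [qwalk_supp ρ ν α β t x]
      · simp
      · rw [Finset.mem_Icc] at hx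
        grind
    rw [h2.unique h1]
    simp [closedF, EE, gg]
  | succ r ih =>
    intro u
    have d1 := Fr_deriv ρ ν α β r t i u
    rw [funext ih] at d1
    have hth : ∀ σ : ℝ, ∀ u, HasDerivAt (fun u => σ * Real.arccos (cc (ρ * rz ρ) (Real.sin ν) u))
        (-(σ * vv (ρ * rz ρ) (Real.sin ν) u)) u := fun σ u =>
      ((phi_deriv P u).const_mul σ).congr_deriv (by ring)
    have hw : ∀ σ : ℝ, ContDiff ℝ ∞ fun u => σ * vv (ρ * rz ρ) (Real.sin ν) u := fun σ =>
      contDiff_const.mul (vv_smooth P)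
    have d2 := ((EE_deriv (hth 1) (hw 1) (pp_smooth P α β 1 i) r t u).add
      (EE_deriv (hth (-1)) (hw (-1)) (pp_smooth P α β (-1) i) r t u)).const_mul (Complex.I ^ t)
    have := d1.unique d2
    have hI : (-Complex.I) ≠ 0 := neg_ne_zero.2 Complex.I_ne_zero
    refine mul_left_cancel₀ hI (this.trans ?_)
    ring

/-! ### Parseval -/

lemma orth (ν : ℝ) (n : ℤ) : ∫ u in (-(π / 2))..(3 * π / 2), ee ν u n = if n = 0 then 2 * (π : ℂ) else 0 := by
  split_ifs with h
  · subst h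
    simp [ee]
    ring
  · have h1 : ∀ u : ℝ, ee ν u n = Complex.exp (-Complex.I * ν * n) * Complex.exp ((-Complex.I * n) * u) := by
      intro u; unfold ee; rw [← Complex.exp_add]; congr 1; ring
    simp only [h1]
    have hn : (-Complex.I * n) ≠ 0 := by simp [h]
    rw [intervalIntegral.integral_const_mul, integral_exp_mul_complex hn]
    have : Complex.exp (-Complex.I * n * ((3 * π / 2 : ℝ) : ℂ)) = Complex.exp (-Complex.I * n * ((-(π / 2) : ℝ) : ℂ)) := by
      rw [Complex.exp_eq_exp_iff_exists_int]
      exact ⟨-n, by push_cast; ring⟩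
    rw [this]; simp

lemma ee_cont (ν : ℝ) (x : ℤ) : Continuous fun u => ee ν u x := by
  unfold ee; fun_prop

lemma parseval (ν : ℝ) (s : Finset ℤ) (f g : ℤ → ℂ) :
    ∫ u in (-(π / 2))..(3 * π / 2), (starRingEnd ℂ) (∑ x ∈ s, f x * ee ν u x) * (∑ x ∈ s, g x * ee ν u x)
      = 2 * π * ∑ x ∈ s, (starRingEnd ℂ) (f x) * g x := by
  have h1 : ∀ u, (starRingEnd ℂ) (∑ x ∈ s, f x * ee ν u x) * (∑ x ∈ s, g x * ee ν u x)
      = ∑ x ∈ s, ∑ y ∈ s, ((starRingEnd ℂ) (f x) * g y) * ee ν u (y - x) := by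
    intro u
    rw [map_sum, Finset.sum_mul_sum]
    refine Finset.sum_congr rfl fun x _ => Finset.sum_congr rfl fun y _ => ?_
    have h2 : ee ν u (y - x) = (starRingEnd ℂ) (ee ν u x) * ee ν u y := by
      unfold ee
      rw [← Complex.exp_conj, ← Complex.exp_add]
      congr 1
      simp
      ring
    rw [h2, map_mul]; ring
  simp only [h1]
  rw [intervalIntegral.integral_finsetSum, Finset.mul_sum]
  · refine Finset.sum_congr rfl fun x hx => ?_
    rw [intervalIntegral.integral_finsetSum]
    · simp only [intervalIntegral.integral_const_mul, orth, sub_eq_zero]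
      simp [hx]
      ring
    · intro y _
      exact ((ee_cont ν _).const_mul _).intervalIntegrable _ _ |> fun h => h
  · intro x _
    refine Continuous.intervalIntegrable ?_ _ _
    exact continuous_finsetSum _ fun y _ => continuous_const.mul (ee_cont ν _)

lemma moment_eq (ρ ν : ℝ) (α β : ℂ) (r t : ℕ) :
    ((∑' x : ℤ, ((x : ℝ) / (t : ℝ)) ^ r * qprob ρ ν α β t x : ℝ) : ℂ)
      = (1 / (2 * π)) * ∫ u in (-(π / 2))..(3 * π / 2),
        (((starRingEnd ℂ) (Fr ρ ν α β 0 t 0 u) * Fr ρ ν α β r t 0 u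
          + (starRingEnd ℂ) (Fr ρ ν α β 0 t 1 u) * Fr ρ ν α β r t 1 u) / (t : ℂ) ^ r) := by
  have hc : ∀ r i, Continuous (Fr ρ ν α β r t i) := fun r i =>
    continuous_iff_continuousAt.2 fun u => (Fr_deriv ρ ν α β r t i u).continuousAt
  have hcc : ∀ i, Continuous fun u => (starRingEnd ℂ) (Fr ρ ν α β 0 t i u) * Fr ρ ν α β r t i u :=
    fun i => (Complex.continuous_conj.comp (hc 0 i)).mul (hc r i)
  rw [intervalIntegral.integral_div, intervalIntegral.integral_add ((hcc 0).intervalIntegrable _ _)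
    ((hcc 1).intervalIntegrable _ _)]
  unfold Fr
  rw [parseval, parseval, tsum_eq_sum (s := Finset.Icc (-(t : ℤ)) t)]
  · rw [← mul_add, ← Finset.sum_add_distrib]
    have hpi : (π : ℂ) ≠ 0 := by exact_mod_cast Real.pi_ne_zero
    have e : ∀ z : ℂ, 1 / (2 * (π : ℂ)) * (2 * π * z / (t : ℂ) ^ r) = z / (t : ℂ) ^ r := by
      intro z; field_simp
    rw [e, Finset.sum_div]
    push_cast
    refine Finset.sum_congr rfl fun x _ => ?_
    have n0 : ∀ z : ℂ, ((‖z‖ : ℝ) : ℂ) ^ 2 = (starRingEnd ℂ) z * z := fun z => (Complex.conj_mul' z).symm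
    simp only [qprob]
    push_cast
    rw [n0, n0]
    simp only [pow_zero, one_mul, div_pow]
    ring
  · intro x hx
    have : qwalk ρ ν α β t x = 0 := qwalk_supp ρ ν α β t x (by
      rw [Finset.mem_Icc] at hx
      grind)
    simp [qprob, this]

/-! ### The limit in Fourier space -/

def KK (w : ℝ → ℝ) (p : ℝ → ℂ) (r : ℕ) (u : ℝ) : ℝ := ∑ j ∈ Finset.range r, ‖gg w p r j u‖

lemma KK_cont {w : ℝ → ℝ} {p : ℝ → ℂ} (hw : ContDiff ℝ ∞ w) (hp : ContDiff ℝ ∞ p) (r : ℕ) :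
    Continuous (KK w p r) :=
  continuous_finsetSum _ fun j _ => (gg_smooth hw hp r j).continuous.norm

lemma EE_split (θ w : ℝ → ℝ) (p : ℝ → ℂ) (r t : ℕ) (ht : 1 ≤ t) (u : ℝ) :
    ∃ Q : ℂ, EE θ w p r t u / (t : ℂ) ^ r
      = Complex.exp (Complex.I * t * (θ u : ℂ)) * ((w u : ℂ) ^ r * p u + Q) ∧
      ‖Q‖ ≤ 1 / t * KK w p r u := by
  have htc : (t : ℂ) ≠ 0 := by exact_mod_cast (by omega : t ≠ 0)
  have ht1 : (1 : ℝ) ≤ t := by exact_mod_cast ht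
  refine ⟨∑ j ∈ Finset.range r, ((t : ℂ) ^ j / (t : ℂ) ^ r) * gg w p r j u, ?_, ?_⟩
  · unfold EE
    rw [Finset.sum_range_succ, gg_top, mul_div_assoc, add_div, Finset.sum_div]
    congr 1
    rw [add_comm]
    congr 1
    · field_simp
    · exact Finset.sum_congr rfl fun j _ => by ring
  · unfold KK
    rw [Finset.mul_sum]
    refine (norm_sum_le _ _).trans (Finset.sum_le_sum fun j hj => ?_)
    rw [norm_mul]
    refine mul_le_mul_of_nonneg_right ?_ (norm_nonneg _)
    rw [norm_div, norm_pow, norm_pow, Complex.norm_natCast, div_le_div_iff₀ (by positivity) (by positivity),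
      one_mul, ← pow_succ]
    exact pow_le_pow_right₀ ht1 (Finset.mem_range.1 hj)

lemma norm_exp_I (t : ℕ) (x : ℝ) : ‖Complex.exp (Complex.I * t * (x : ℂ))‖ = 1 := by
  have : Complex.I * t * (x : ℂ) = ((t * x : ℝ) : ℂ) * Complex.I := by push_cast; ring
  rw [this, Complex.norm_exp_ofReal_mul_I]

lemma unit_conj {z : ℂ} (h : ‖z‖ = 1) : (starRingEnd ℂ) z * z = 1 := by
  rw [Complex.conj_mul', h]; norm_num

def nn (ρ ν : ℝ) (α β : ℂ) (σ u : ℝ) : ℂ :=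
  (starRingEnd ℂ) (pp ρ ν α β σ 0 u) * pp ρ ν α β σ 0 u
     + (starRingEnd ℂ) (pp ρ ν α β σ 1 u) * pp ρ ν α β σ 1 u

def LL (ρ ν : ℝ) (α β : ℂ) (r : ℕ) (u : ℝ) : ℂ :=
  ((1 * vv (ρ * rz ρ) (Real.sin ν) u : ℝ) : ℂ) ^ r * nn ρ ν α β 1 u
    + (((-1) * vv (ρ * rz ρ) (Real.sin ν) u : ℝ) : ℂ) ^ r * nn ρ ν α β (-1) u

def TT (ρ ν : ℝ) (α β : ℂ) (r t : ℕ) (u : ℝ) : ℂ :=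
  ((starRingEnd ℂ) (Fr ρ ν α β 0 t 0 u) * Fr ρ ν α β r t 0 u
          + (starRingEnd ℂ) (Fr ρ ν α β 0 t 1 u) * Fr ρ ν α β r t 1 u) / (t : ℂ) ^ r

def HH (ρ ν : ℝ) (α β : ℂ) (r : ℕ) (u : ℝ) : ℝ :=
  ∑ i : Fin 2, (‖pp ρ ν α β 1 i u‖ + ‖pp ρ ν α β (-1) i u‖) *
    (KK (fun u => 1 * vv (ρ * rz ρ) (Real.sin ν) u) (pp ρ ν α β 1 i) r u
      + KK (fun u => (-1) * vv (ρ * rz ρ) (Real.sin ν) u) (pp ρ ν α β (-1) i) r u)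

lemma TT_bound {ρ ν : ℝ} (hρ : ρ ∈ Set.Ioo (0 : ℝ) 1) (P : Par (ρ * rz ρ) (Real.sin ν)) (α β : ℂ)
    (r t : ℕ) (ht : 1 ≤ t) (u : ℝ) :
    ‖TT ρ ν α β r t u - LL ρ ν α β r u‖ ≤ 1 / t * HH ρ ν α β r u := by
  have o1 := pp_orth hρ P α β u 1 (Or.inl rfl)
  have o2 := pp_orth hρ P α β u (-1) (Or.inr rfl)
  rw [neg_neg] at o2
  have sp := fun i => EE_split (fun u => 1 * Real.arccos (cc (ρ * rz ρ) (Real.sin ν) u))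
    (fun u => 1 * vv (ρ * rz ρ) (Real.sin ν) u) (pp ρ ν α β 1 i) r t ht u
  have sm := fun i => EE_split (fun u => (-1) * Real.arccos (cc (ρ * rz ρ) (Real.sin ν) u))
    (fun u => (-1) * vv (ρ * rz ρ) (Real.sin ν) u) (pp ρ ν α β (-1) i) r t ht u
  choose Q hQ hQn using sp
  choose R hR hRn using sm
  have hE1 := norm_exp_I t (1 * Real.arccos (cc (ρ * rz ρ) (Real.sin ν) u))
  have hE2 := norm_exp_I t ((-1) * Real.arccos (cc (ρ * rz ρ) (Real.sin ν) u))
  have hI : ‖Complex.I ^ t‖ = 1 := by simp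
  have z1 := unit_conj hE1
  have z2 := unit_conj hE2
  have z3 := unit_conj hI
  have hF0 : ∀ i, Fr ρ ν α β 0 t i u = Complex.I ^ t *
      (Complex.exp (Complex.I * t * ((1 * Real.arccos (cc (ρ * rz ρ) (Real.sin ν) u) : ℝ) : ℂ)) * pp ρ ν α β 1 i u
      + Complex.exp (Complex.I * t * (((-1) * Real.arccos (cc (ρ * rz ρ) (Real.sin ν) u) : ℝ) : ℂ)) * pp ρ ν α β (-1) i u) := by
    intro i
    rw [Fr_eq hρ P]
    simp only [EE, gg, zero_add, Finset.range_one, Finset.sum_singleton, pow_zero, one_mul]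
  have hFr : ∀ i, Fr ρ ν α β r t i u / (t : ℂ) ^ r = Complex.I ^ t *
      (Complex.exp (Complex.I * t * ((1 * Real.arccos (cc (ρ * rz ρ) (Real.sin ν) u) : ℝ) : ℂ)) *
        (((1 * vv (ρ * rz ρ) (Real.sin ν) u : ℝ) : ℂ) ^ r * pp ρ ν α β 1 i u + Q i)
      + Complex.exp (Complex.I * t * (((-1) * Real.arccos (cc (ρ * rz ρ) (Real.sin ν) u) : ℝ) : ℂ)) *
        ((((-1) * vv (ρ * rz ρ) (Real.sin ν) u : ℝ) : ℂ) ^ r * pp ρ ν α β (-1) i u + R i)) := by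
    intro i
    rw [← hQ i, ← hR i, Fr_eq hρ P]
    ring
  have hT : TT ρ ν α β r t u = (starRingEnd ℂ) (Fr ρ ν α β 0 t 0 u) * (Fr ρ ν α β r t 0 u / (t : ℂ) ^ r)
          + (starRingEnd ℂ) (Fr ρ ν α β 0 t 1 u) * (Fr ρ ν α β r t 1 u / (t : ℂ) ^ r) := by
    unfold TT; ring
  have hn0 : ∀ i, ‖Fr ρ ν α β 0 t i u‖ ≤ ‖pp ρ ν α β 1 i u‖ + ‖pp ρ ν α β (-1) i u‖ := by
    intro i
    rw [hF0, norm_mul, hI, one_mul]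
    refine (norm_add_le _ _).trans ?_
    rw [norm_mul, norm_mul, hE1, hE2, one_mul, one_mul]
  unfold LL nn
  generalize ((1 * vv (ρ * rz ρ) (Real.sin ν) u : ℝ) : ℂ) ^ r = W1 at *
  generalize (((-1) * vv (ρ * rz ρ) (Real.sin ν) u : ℝ) : ℂ) ^ r = W2 at *
  generalize Complex.exp (Complex.I * t * ((1 * Real.arccos (cc (ρ * rz ρ) (Real.sin ν) u) : ℝ) : ℂ)) = E1 at *
  generalize Complex.exp (Complex.I * t * (((-1) * Real.arccos (cc (ρ * rz ρ) (Real.sin ν) u) : ℝ) : ℂ)) = E2 at *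
  generalize Complex.I ^ t = J at *
  have hdiff : TT ρ ν α β r t u - (W1 * ((starRingEnd ℂ) (pp ρ ν α β 1 0 u) * pp ρ ν α β 1 0 u
     + (starRingEnd ℂ) (pp ρ ν α β 1 1 u) * pp ρ ν α β 1 1 u)
     + W2 * ((starRingEnd ℂ) (pp ρ ν α β (-1) 0 u) * pp ρ ν α β (-1) 0 u
     + (starRingEnd ℂ) (pp ρ ν α β (-1) 1 u) * pp ρ ν α β (-1) 1 u))
     = ∑ i : Fin 2, (starRingEnd ℂ) (Fr ρ ν α β 0 t i u) * (J * (E1 * Q i + E2 * R i)) := by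
    rw [hT, Fin.sum_univ_two]
    simp only [hFr, hF0, map_mul, map_add]
    generalize pp ρ ν α β 1 0 u = a0 at *
    generalize pp ρ ν α β 1 1 u = a1 at *
    generalize pp ρ ν α β (-1) 0 u = b0 at *
    generalize pp ρ ν α β (-1) 1 u = b1 at *
    generalize (starRingEnd ℂ) J = J' at *
    generalize (starRingEnd ℂ) E1 = E1' at *
    generalize (starRingEnd ℂ) E2 = E2' at *
    generalize (starRingEnd ℂ) a0 = a0' at *
    generalize (starRingEnd ℂ) a1 = a1' at *
    generalize (starRingEnd ℂ) b0 = b0' at *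
    generalize (starRingEnd ℂ) b1 = b1' at *
    linear_combination J' * J * E1' * E2 * W2 * o1 + J' * J * E2' * E1 * W1 * o2
      + W1 * (a0' * a0 + a1' * a1) * (E1' * E1 * z3 + z1)
      + W2 * (b0' * b0 + b1' * b1) * (E2' * E2 * z3 + z2)
  rw [hdiff]
  unfold HH
  rw [Finset.mul_sum]
  refine (norm_sum_le _ _).trans (Finset.sum_le_sum fun i _ => ?_)
  rw [norm_mul, norm_mul, hI, one_mul, RCLike.norm_conj]
  have h2 : ‖E1 * Q i + E2 * R i‖ ≤ 1 / t * (KK (fun u => 1 * vv (ρ * rz ρ) (Real.sin ν) u) (pp ρ ν α β 1 i) r u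
      + KK (fun u => (-1) * vv (ρ * rz ρ) (Real.sin ν) u) (pp ρ ν α β (-1) i) r u) := by
    refine (norm_add_le _ _).trans ?_
    rw [norm_mul, norm_mul, hE1, hE2, one_mul, one_mul, mul_add]
    exact add_le_add (hQn i) (hRn i)
  refine (mul_le_mul (hn0 i) h2 (norm_nonneg _) (by positivity)).trans (le_of_eq ?_)
  ring

lemma HH_nonneg (ρ ν : ℝ) (α β : ℂ) (r : ℕ) (u : ℝ) : 0 ≤ HH ρ ν α β r u := by
  unfold HH KK; positivity

lemma LL_cont {ρ ν : ℝ} (P : Par (ρ * rz ρ) (Real.sin ν)) (α β : ℂ) (r : ℕ) :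
    Continuous (LL ρ ν α β r) := by
  have hp := fun σ i => (pp_smooth P α β σ i).continuous
  have hv := continuous_vv P
  have hn : ∀ σ, Continuous (nn ρ ν α β σ) := fun σ =>
    ((Complex.continuous_conj.comp (hp σ 0)).mul (hp σ 0)).add
      ((Complex.continuous_conj.comp (hp σ 1)).mul (hp σ 1))
  exact (((Complex.continuous_ofReal.comp (continuous_const.mul hv)).pow r).mul (hn 1)).add
    (((Complex.continuous_ofReal.comp (continuous_const.mul hv)).pow r).mul (hn (-1)))

lemma HH_cont {ρ ν : ℝ} (P : Par (ρ * rz ρ) (Real.sin ν)) (α β : ℂ) (r : ℕ) :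
    Continuous (HH ρ ν α β r) := by
  have hp := fun σ i => (pp_smooth P α β σ i)
  have hw : ∀ σ : ℝ, ContDiff ℝ ∞ fun u => σ * vv (ρ * rz ρ) (Real.sin ν) u := fun σ =>
      contDiff_const.mul (vv_smooth P)
  exact continuous_finsetSum _ fun i _ => ((hp 1 i).continuous.norm.add (hp (-1) i).continuous.norm).mul
    ((KK_cont (hw 1) (hp 1 i) r).add (KK_cont (hw (-1)) (hp (-1) i) r))

lemma TT_cont (ρ ν : ℝ) (α β : ℂ) (r t : ℕ) : Continuous (TT ρ ν α β r t) := by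
  have hc : ∀ r i, Continuous (Fr ρ ν α β r t i) := fun r i =>
    continuous_iff_continuousAt.2 fun u => (Fr_deriv ρ ν α β r t i u).continuousAt
  have hcc : ∀ i, Continuous fun u => (starRingEnd ℂ) (Fr ρ ν α β 0 t i u) * Fr ρ ν α β r t i u :=
    fun i => (Complex.continuous_conj.comp (hc 0 i)).mul (hc r i)
  exact ((hcc 0).add (hcc 1)).div_const _

lemma TT_tendsto {ρ ν : ℝ} (hρ : ρ ∈ Set.Ioo (0 : ℝ) 1) (P : Par (ρ * rz ρ) (Real.sin ν)) (α β : ℂ)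
    (r : ℕ) : Tendsto (fun t : ℕ => ∫ u in (-(π / 2))..(3 * π / 2), TT ρ ν α β r t u) atTop
      (𝓝 (∫ u in (-(π / 2))..(3 * π / 2), LL ρ ν α β r u)) := by
  refine intervalIntegral.tendsto_integral_filter_of_dominated_convergence
    (fun u => ‖LL ρ ν α β r u‖ + HH ρ ν α β r u) ?_ ?_ ?_ ?_
  · exact Eventually.of_forall fun t => (TT_cont ρ ν α β r t).aestronglyMeasurable
  · filter_upwards [eventually_ge_atTop 1] with t ht
    refine Eventually.of_forall fun u _ => ?_
    have h1 := TT_bound hρ P α β r t ht u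
    have h2 : 1 / (t : ℝ) * HH ρ ν α β r u ≤ HH ρ ν α β r u := by
      refine mul_le_of_le_one_left (HH_nonneg _ _ _ _ _ _) ?_
      rw [div_le_one (by exact_mod_cast ht)]
      exact_mod_cast ht
    have h3 := norm_le_norm_add_norm_sub' (TT ρ ν α β r t u) (LL ρ ν α β r u)
    linarith
  · exact ((LL_cont P α β r).norm.add (HH_cont P α β r)).intervalIntegrable _ _
  · refine Eventually.of_forall fun u _ => ?_
    rw [tendsto_iff_norm_sub_tendsto_zero]
    refine squeeze_zero' (g := fun t : ℕ => 1 / (t : ℝ) * HH ρ ν α β r u)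
      (Eventually.of_forall fun t => norm_nonneg _) ?_ ?_
    · filter_upwards [eventually_ge_atTop 1] with t ht using TT_bound hρ P α β r t ht u
    · simpa using (tendsto_one_div_atTop_nhds_zero_nat (𝕜 := ℝ)).mul_const (HH ρ ν α β r u)

lemma LL_sym {ρ ν : ℝ} (hρ : ρ ∈ Set.Ioo (0 : ℝ) 1) (P : Par (ρ * rz ρ) (Real.sin ν)) (α β : ℂ)
    (hαβ : ‖α‖ ^ 2 + ‖β‖ ^ 2 = 1) (r : ℕ) (u : ℝ) :
    LL ρ ν α β r u + LL ρ ν α β r (π - u)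
      = ((vv (ρ * rz ρ) (Real.sin ν) u ^ r * gam ρ ν α β (vv (ρ * rz ρ) (Real.sin ν) u)
        + (-vv (ρ * rz ρ) (Real.sin ν) u) ^ r * gam ρ ν α β (-vv (ρ * rz ρ) (Real.sin ν) u) : ℝ) : ℂ) := by
  have hS : SS (ρ * rz ρ) (Real.sin ν) (π - u) = SS (ρ * rz ρ) (Real.sin ν) u := by
    simp [SS, cc, Real.sin_pi_sub]
  have hv : vv (ρ * rz ρ) (Real.sin ν) (π - u) = - vv (ρ * rz ρ) (Real.sin ν) u := by
    unfold vv; rw [hS, Real.cos_pi_sub]; ring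
  have n1 := fun u => pp_norm hρ P α β hαβ u 1 (Or.inl rfl)
  have n2 := fun u => pp_norm hρ P α β hαβ u (-1) (Or.inr rfl)
  have hBd : BB ρ ν u - BB ρ ν (π - u)
      = -2 * (rz ρ : ℂ) ^ 2 * (Real.cos ν - Complex.I * Real.sin ν) * Real.cos u := by
    have a1 : Complex.exp (-Complex.I * (u + ν)) = Complex.exp (-Complex.I * ν) * Complex.exp (-Complex.I * u) := by
      rw [← Complex.exp_add]; congr 1; ring
    have a2 : Complex.exp (-Complex.I * ((π - u : ℝ) + ν)) = Complex.exp (-Complex.I * ν) * Complex.exp (-Complex.I * (π - u : ℝ)) := by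
      rw [← Complex.exp_add]; congr 1; ring
    unfold BB
    rw [a1, a2, exp_neg_form, exp_neg_form, exp_neg_form, Real.cos_pi_sub, Real.sin_pi_sub]
    push_cast; ring
  have hCd : BC ρ ν u - BC ρ ν (π - u)
      = -2 * (rz ρ : ℂ) ^ 2 * (Real.cos ν + Complex.I * Real.sin ν) * Real.cos u := by
    have a1 : Complex.exp (Complex.I * (u + ν)) = Complex.exp (Complex.I * ν) * Complex.exp (Complex.I * u) := by
      rw [← Complex.exp_add]; congr 1; ring
    have a2 : Complex.exp (Complex.I * ((π - u : ℝ) + ν)) = Complex.exp (Complex.I * ν) * Complex.exp (Complex.I * (π - u : ℝ)) := by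
      rw [← Complex.exp_add]; congr 1; ring
    unfold BC
    rw [a1, a2, exp_pos_form, exp_pos_form, exp_pos_form, Real.cos_pi_sub, Real.sin_pi_sub]
    push_cast; ring
  have hyd : (yy (ρ * rz ρ) ν u : ℂ) - yy (ρ * rz ρ) ν (π - u) = 2 * (ρ * rz ρ) * Real.cos u := by
    unfold yy; rw [Real.cos_pi_sub]; push_cast; ring
  have hρ0 : (ρ : ℂ) ≠ 0 := by exact_mod_cast hρ.1.ne'
  have hS0 : (SS (ρ * rz ρ) (Real.sin ν) u : ℂ) ≠ 0 := by exact_mod_cast (SS_pos P u).ne'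
  have hvm : (vv (ρ * rz ρ) (Real.sin ν) u : ℂ) * SS (ρ * rz ρ) (Real.sin ν) u = ρ * rz ρ * Real.cos u := by
    exact_mod_cast vv_mul P u
  -- the linear coefficient
  obtain ⟨Γ, hΓ⟩ : ∃ Γ : ℝ, Γ = ‖α‖ ^ 2 - ‖β‖ ^ 2
    - (2 * rz ρ / ρ) * ((α * (starRingEnd ℂ) β).re * Real.cos ν
        - (α * (starRingEnd ℂ) β).im * Real.sin ν) := ⟨_, rfl⟩
  have hgam : ∀ x, gam ρ ν α β x = 1 + Γ * x := fun x => by rw [hΓ]; rfl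
  have hΓc : (ρ : ℂ) * Γ = ρ * ((starRingEnd ℂ) α * α - (starRingEnd ℂ) β * β)
      - rz ρ * ((starRingEnd ℂ) α * β * (Real.cos ν - Complex.I * Real.sin ν)
        + α * (starRingEnd ℂ) β * (Real.cos ν + Complex.I * Real.sin ν)) := by
    have hre : (((α * (starRingEnd ℂ) β).re * Real.cos ν - (α * (starRingEnd ℂ) β).im * Real.sin ν : ℝ) : ℂ) * 2
        = (starRingEnd ℂ) α * β * (Real.cos ν - Complex.I * Real.sin ν)
        + α * (starRingEnd ℂ) β * (Real.cos ν + Complex.I * Real.sin ν) := by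
      apply Complex.ext <;> simp [-Complex.ofReal_cos, -Complex.ofReal_sin] <;> ring
    rw [hΓ, ← hre, Complex.conj_mul', Complex.conj_mul']
    push_cast
    field_simp
  have hkey : ∀ Y Y' B B' C C' : ℂ, B - B' = -2 * (rz ρ : ℂ) ^ 2 * (Real.cos ν - Complex.I * Real.sin ν) * Real.cos u →
      C - C' = -2 * (rz ρ : ℂ) ^ 2 * (Real.cos ν + Complex.I * Real.sin ν) * Real.cos u →
      Y - Y' = 2 * (ρ * rz ρ) * Real.cos u →
      (Y * ((starRingEnd ℂ) α * α - (starRingEnd ℂ) β * β)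
        + (starRingEnd ℂ) α * β * B + α * (starRingEnd ℂ) β * C) / SS (ρ * rz ρ) (Real.sin ν) u
      - (Y' * ((starRingEnd ℂ) α * α - (starRingEnd ℂ) β * β)
        + (starRingEnd ℂ) α * β * B' + α * (starRingEnd ℂ) β * C') / SS (ρ * rz ρ) (Real.sin ν) u
      = 2 * Γ * vv (ρ * rz ρ) (Real.sin ν) u := by
    intro Y Y' B B' C C' h1 h2 h3
    rw [← sub_div, div_eq_iff hS0]
    linear_combination ((starRingEnd ℂ) α * α - (starRingEnd ℂ) β * β) * h3 + (starRingEnd ℂ) α * β * h1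
      + α * (starRingEnd ℂ) β * h2 - 2 * Γ * hvm - 2 * rz ρ * Real.cos u * hΓc
  have hk := hkey _ _ _ _ _ _ hBd hCd hyd
  unfold LL nn
  rw [n1, n1, n2, n2, hv, hS, hgam, hgam]
  simp only [mul_div_assoc]
  generalize (yy (ρ * rz ρ) ν u * ((starRingEnd ℂ) α * α - (starRingEnd ℂ) β * β)
        + (starRingEnd ℂ) α * β * BB ρ ν u + α * (starRingEnd ℂ) β * BC ρ ν u) / SS (ρ * rz ρ) (Real.sin ν) u = N at *
  generalize (yy (ρ * rz ρ) ν (π - u) * ((starRingEnd ℂ) α * α - (starRingEnd ℂ) β * β)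
        + (starRingEnd ℂ) α * β * BB ρ ν (π - u) + α * (starRingEnd ℂ) β * BC ρ ν (π - u)) / SS (ρ * rz ρ) (Real.sin ν) u = N' at *
  generalize vv (ρ * rz ρ) (Real.sin ν) u = v at *
  have hw : ((-1 : ℝ) * -v) = v := by ring
  have hw2 : ((-1 : ℝ) * v) = -v := by ring
  rw [hw, hw2, one_mul, one_mul]
  push_cast
  generalize (-(v : ℂ)) ^ r = W
  linear_combination ((v : ℂ) ^ r / 2 - W / 2) * hk

lemma LL_integral {ρ ν : ℝ} (hρ : ρ ∈ Set.Ioo (0 : ℝ) 1) (P : Par (ρ * rz ρ) (Real.sin ν)) (α β : ℂ)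
    (hαβ : ‖α‖ ^ 2 + ‖β‖ ^ 2 = 1) (r : ℕ) :
    ∫ u in (-(π / 2))..(3 * π / 2), LL ρ ν α β r u = ((∫ u in (-(π / 2))..(π / 2),
      (vv (ρ * rz ρ) (Real.sin ν) u ^ r * gam ρ ν α β (vv (ρ * rz ρ) (Real.sin ν) u)
        + (-vv (ρ * rz ρ) (Real.sin ν) u) ^ r * gam ρ ν α β (-vv (ρ * rz ρ) (Real.sin ν) u)) : ℝ) : ℂ) := by
  have hc := LL_cont P α β r
  rw [← intervalIntegral.integral_ofReal, ← intervalIntegral.integral_add_adjacent_intervals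
    (hc.intervalIntegrable (-(π / 2)) (π / 2)) (hc.intervalIntegrable (π / 2) (3 * π / 2))]
  have h1 : ∫ u in (π / 2)..(3 * π / 2), LL ρ ν α β r u
      = ∫ u in (-(π / 2))..(π / 2), LL ρ ν α β r (π - u) := by
    rw [intervalIntegral.integral_comp_sub_left (fun u => LL ρ ν α β r u)]
    congr 1 <;> ring
  have hc2 : Continuous fun u => LL ρ ν α β r (π - u) := hc.comp (continuous_const.sub continuous_id)
  rw [h1, ← intervalIntegral.integral_add (hc.intervalIntegrable _ _) (hc2.intervalIntegrable _ _)]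
  simp only [LL_sym hρ P α β hαβ]

lemma xif_eq {ρ : ℝ} (hρ : ρ ∈ Set.Ioo (0 : ℝ) 1) (ν x : ℝ) :
    xif ρ ν x = xg (ρ * rz ρ) (Real.sin ν) x := by
  unfold xif xg
  have hz := rz_sq hρ
  rw [Real.cos_sq']
  linear_combination (-x ^ 2) * hz

/-- convergence of the rescaled moments of the quantum walk. -/
theorem stmt15 (ρ ν : ℝ) (hρ : ρ ∈ Set.Ioo (0 : ℝ) 1)
    (hexc : ∀ n : ℤ, ¬(ρ = 1 / Real.sqrt 2 ∧ ν = π / 2 + n * π))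
    (α β : ℂ) (hαβ : ‖α‖ ^ 2 + ‖β‖ ^ 2 = 1) (r : ℕ) :
    Tendsto (fun t : ℕ => ∑' x : ℤ, ((x : ℝ) / (t : ℝ)) ^ r * qprob ρ ν α β t x)
      atTop
      (𝓝 (∫ x in (-(hstar ρ ν))..(hstar ρ ν),
        x ^ r * (Real.sqrt (etaP ρ ν x) + Real.sqrt (etaM ρ ν x)) * gam ρ ν α β x
          / (2 * π * (1 - x ^ 2) * Real.sqrt (xif ρ ν x)))) := by
  have P := par_of hρ hexc
  have hf : Continuous fun x => x ^ r * gam ρ ν α β x := by unfold gam; fun_prop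
  have hcv := change_var_sym P _ hf
  have hh : hstar ρ ν = hg (ρ * rz ρ) (Real.sin ν) := by
    unfold hstar hg; rw [mul_pow]
  have hP : ∀ x, etaP ρ ν x = eg 1 (ρ * rz ρ) (Real.sin ν) x := by
    intro x; unfold etaP eg; rw [xif_eq hρ, Real.cos_sq']; ring
  have hM : ∀ x, etaM ρ ν x = eg (-1) (ρ * rz ρ) (Real.sin ν) x := by
    intro x; unfold etaM eg; rw [xif_eq hρ, Real.cos_sq']; ring
  have htarget : (∫ x in (-(hstar ρ ν))..(hstar ρ ν),
        x ^ r * (Real.sqrt (etaP ρ ν x) + Real.sqrt (etaM ρ ν x)) * gam ρ ν α β x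
          / (2 * π * (1 - x ^ 2) * Real.sqrt (xif ρ ν x)))
      = 1 / (2 * π) * ∫ u in (-(π / 2))..(π / 2),
      (vv (ρ * rz ρ) (Real.sin ν) u ^ r * gam ρ ν α β (vv (ρ * rz ρ) (Real.sin ν) u)
        + (-vv (ρ * rz ρ) (Real.sin ν) u) ^ r * gam ρ ν α β (-vv (ρ * rz ρ) (Real.sin ν) u)) := by
    rw [← hcv, hh, ← intervalIntegral.integral_const_mul]
    congr 1
    funext x
    rw [hP, hM, xif_eq hρ, mul_assoc (2 * π), div_mul_div_comm]
    congr 1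
    ring
  rw [htarget]
  have h1 := (TT_tendsto hρ P α β r).const_mul (1 / (2 * (π : ℂ)))
  rw [LL_integral hρ P α β hαβ] at h1
  have h2 := (Complex.continuous_re.tendsto _).comp h1
  have hpi : ∀ x : ℝ, (1 / (2 * (π : ℂ)) * (x : ℂ)) = ((1 / (2 * π) * x : ℝ) : ℂ) := by
    intro x; push_cast; ring
  rw [hpi, Complex.ofReal_re] at h2
  refine h2.congr fun t => ?_
  have := moment_eq ρ ν α β r t
  change (1 / (2 * (π : ℂ)) * ∫ u in (-(π / 2))..(3 * π / 2), TT ρ ν α β r t u).re = _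
  unfold TT
  rw [← this, Complex.ofReal_re]

end
end

section
/- Let ρ = 1/√2 and ν = π/2 + nπ for an integer n, and let k ∈ ℝ. Define R(φ) = [[e^{iφ}, 0], [0, e^{−iφ}]] and V = (1/√2)[[e^{−(−1)ⁿ iπ/4}, −e^{−(−1)ⁿ iπ/4}], [−e^{(−1)ⁿ iπ/4}, −e^{(−1)ⁿ iπ/4}]]. Then (R(−k/2)·V)² = (1/2)[[1 − (−1)ⁿ i e^{−ik}, 1 + (−1)ⁿ i e^{−ik}], [−1 + (−1)ⁿ i e^{ik}, 1 + (−1)ⁿ i e^{ik}]], and H̃(k) = −i·(−1)ⁿ·(R(−k/2)·V)². -/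
open Real

noncomputable section

/-- The matrix `H̃(k)`. -/
def Htilde (ρ ν k : ℝ) : Matrix (Fin 2) (Fin 2) ℂ :=
  !![-((ρ * rz ρ : ℝ) : ℂ) * (Complex.exp (Complex.I * (ν : ℂ)) + Complex.exp (-(Complex.I * (k : ℂ)))),
      -((ρ ^ 2 : ℝ) : ℂ) * Complex.exp (Complex.I * (ν : ℂ)) + (((rz ρ) ^ 2 : ℝ) : ℂ) * Complex.exp (-(Complex.I * (k : ℂ)));
      -((ρ ^ 2 : ℝ) : ℂ) * Complex.exp (-(Complex.I * (ν : ℂ))) + (((rz ρ) ^ 2 : ℝ) : ℂ) * Complex.exp (Complex.I * (k : ℂ)),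
      ((ρ * rz ρ : ℝ) : ℂ) * (Complex.exp (-(Complex.I * (ν : ℂ))) + Complex.exp (Complex.I * (k : ℂ)))]

/-- `R(φ) = diag(e^{iφ}, e^{−iφ})`. -/
def Rmat (φ : ℝ) : Matrix (Fin 2) (Fin 2) ℂ :=
  !![Complex.exp (Complex.I * (φ : ℂ)), 0; 0, Complex.exp (-(Complex.I * (φ : ℂ)))]

/-- The coin matrix `V` depending on the parity of `n`. -/
def Vmat (n : ℤ) : Matrix (Fin 2) (Fin 2) ℂ :=
  ((1 / Real.sqrt 2 : ℝ) : ℂ) •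
    !![Complex.exp (-((-1 : ℂ) ^ n * Complex.I * ((π : ℝ) : ℂ) / 4)),
        -Complex.exp (-((-1 : ℂ) ^ n * Complex.I * ((π : ℝ) : ℂ) / 4));
        -Complex.exp ((-1 : ℂ) ^ n * Complex.I * ((π : ℝ) : ℂ) / 4),
        -Complex.exp ((-1 : ℂ) ^ n * Complex.I * ((π : ℝ) : ℂ) / 4)]

/-- at `ρ = 1/√2`, `ν = π/2 + nπ`, the square `(R(−k/2)V)²` has the given
explicit form and `H̃(k) = −i(−1)ⁿ (R(−k/2)V)²`. -/
theorem stmt17 (ρ ν : ℝ) (n : ℤ) (hρ : ρ = 1 / Real.sqrt 2) (hν : ν = π / 2 + n * π)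
    (k : ℝ) :
    (Rmat (-k / 2) * Vmat n) ^ 2
      = ((1 / 2 : ℝ) : ℂ) •
        !![1 - (-1 : ℂ) ^ n * Complex.I * Complex.exp (-(Complex.I * (k : ℂ))),
            1 + (-1 : ℂ) ^ n * Complex.I * Complex.exp (-(Complex.I * (k : ℂ)));
            -1 + (-1 : ℂ) ^ n * Complex.I * Complex.exp (Complex.I * (k : ℂ)),
            1 + (-1 : ℂ) ^ n * Complex.I * Complex.exp (Complex.I * (k : ℂ))] ∧
    Htilde ρ ν k = (-Complex.I * (-1 : ℂ) ^ n) • (Rmat (-k / 2) * Vmat n) ^ 2 := by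
  obtain ⟨s, hs⟩ : ∃ s : ℂ, s = (-1 : ℂ) ^ n := ⟨_, rfl⟩
  have hs2 : s = 1 ∨ s = -1 := by
    rcases Int.even_or_odd n with h | h
    · left; rw [hs, h.neg_one_zpow]
    · right; rw [hs, h.neg_one_zpow]
  have hss : s ^ 2 = 1 := by rcases hs2 with h | h <;> rw [h] <;> norm_num
  have hI : Complex.I ^ 2 = -1 := Complex.I_sq
  have h2 : Complex.exp (((π : ℝ) : ℂ) / 2 * Complex.I) = Complex.I := Complex.exp_pi_div_two_mul_I
  have h2' : Complex.exp (-(((π : ℝ) : ℂ) / 2 * Complex.I)) = -Complex.I := by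
    rw [Complex.exp_neg, h2, Complex.inv_I]
  have hq : Complex.exp (s * Complex.I * ((π : ℝ) : ℂ) / 4) ^ 2 = s * Complex.I := by
    rw [← Complex.exp_nat_mul]
    rcases hs2 with h | h <;> rw [h]
    · rw [one_mul]; refine Eq.trans ?_ h2; congr 1; push_cast; ring
    · rw [neg_one_mul]; refine Eq.trans ?_ h2'; congr 1; push_cast; ring
  have hw : ((1 / Real.sqrt 2 : ℝ) : ℂ) ^ 2 = 1 / 2 := by
    rw [← Complex.ofReal_pow, div_pow, Real.sq_sqrt (by norm_num)]; norm_num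
  have hM : (Rmat (-k / 2) * Vmat n) ^ 2
      = ((1 / 2 : ℝ) : ℂ) •
        !![1 - (-1 : ℂ) ^ n * Complex.I * Complex.exp (-(Complex.I * (k : ℂ))),
            1 + (-1 : ℂ) ^ n * Complex.I * Complex.exp (-(Complex.I * (k : ℂ)));
            -1 + (-1 : ℂ) ^ n * Complex.I * Complex.exp (Complex.I * (k : ℂ)),
            1 + (-1 : ℂ) ^ n * Complex.I * Complex.exp (Complex.I * (k : ℂ))] := by
    unfold Rmat Vmat
    rw [← hs]
    have e1 : Complex.exp (-(Complex.I * (k : ℂ))) =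
        Complex.exp (Complex.I * ((-k / 2 : ℝ) : ℂ)) ^ 2 := by
      rw [← Complex.exp_nat_mul]; congr 1; push_cast; ring
    have e2 : Complex.exp (Complex.I * (k : ℂ)) =
        Complex.exp (-(Complex.I * ((-k / 2 : ℝ) : ℂ))) ^ 2 := by
      rw [← Complex.exp_nat_mul]; congr 1; push_cast; ring
    have e3 : Complex.exp (Complex.I * ((-k / 2 : ℝ) : ℂ)) *
        Complex.exp (-(Complex.I * ((-k / 2 : ℝ) : ℂ))) = 1 := by
      rw [← Complex.exp_add, add_neg_cancel, Complex.exp_zero]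
    have e4 : Complex.exp (s * Complex.I * ((π : ℝ) : ℂ) / 4) *
        Complex.exp (-(s * Complex.I * ((π : ℝ) : ℂ) / 4)) = 1 := by
      rw [← Complex.exp_add, add_neg_cancel, Complex.exp_zero]
    have hh : ((1 / 2 : ℝ) : ℂ) = 1 / 2 := by push_cast; rfl
    rw [e1, e2, hh]
    generalize Complex.exp (Complex.I * ((-k / 2 : ℝ) : ℂ)) = x at *
    generalize Complex.exp (-(Complex.I * ((-k / 2 : ℝ) : ℂ))) = y at *
    generalize Complex.exp (s * Complex.I * ((π : ℝ) : ℂ) / 4) = q at *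
    generalize Complex.exp (-(s * Complex.I * ((π : ℝ) : ℂ) / 4)) = p at *
    generalize ((1 / Real.sqrt 2 : ℝ) : ℂ) = w at *
    have hp : p ^ 2 = - (s * Complex.I) := by
      have : (s * Complex.I) * p ^ 2 = 1 := by rw [← hq, ← mul_pow, e4, one_pow]
      linear_combination (-(s * Complex.I)) * this + p ^ 2 * s ^ 2 * hI - p ^ 2 * hss
    have hxy : x * y * (q * p) = 1 := by rw [e3, e4, one_mul]
    rw [pow_two]
    ext i j
    fin_cases i <;> fin_cases j <;>
      simp [Matrix.mul_apply, Fin.sum_univ_two]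
    · linear_combination (x ^ 2 * p ^ 2 + x * y * (q * p)) * hw + 1 / 2 * x ^ 2 * hp + 1 / 2 * hxy
    · linear_combination (-x ^ 2 * p ^ 2 + x * y * (q * p)) * hw - 1 / 2 * x ^ 2 * hp + 1 / 2 * hxy
    · linear_combination (y ^ 2 * q ^ 2 - x * y * (q * p)) * hw + 1 / 2 * y ^ 2 * hq - 1 / 2 * hxy
    · linear_combination (y ^ 2 * q ^ 2 + x * y * (q * p)) * hw + 1 / 2 * y ^ 2 * hq + 1 / 2 * hxy
  refine ⟨hM, ?_⟩
  rw [hM]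
  have hv : Complex.exp (Complex.I * (ν : ℂ)) = s * Complex.I := by
    have : Complex.I * (ν : ℂ) = ((π : ℝ) : ℂ) / 2 * Complex.I + n * (((π : ℝ) : ℂ) * Complex.I) := by
      rw [hν]; push_cast; ring
    rw [this, Complex.exp_add, h2, Complex.exp_int_mul, Complex.exp_pi_mul_I, hs, mul_comm]
  have hv' : Complex.exp (-(Complex.I * (ν : ℂ))) = -(s * Complex.I) := by
    rw [Complex.exp_neg, hv]
    apply inv_eq_of_mul_eq_one_right
    linear_combination -s ^ 2 * hI + hss
  have hr2 : ρ ^ 2 = 1 / 2 := by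
    rw [hρ, div_pow, Real.sq_sqrt (by norm_num)]; norm_num
  have hrz : rz ρ = ρ := by
    have h0 : 0 ≤ ρ := by rw [hρ]; positivity
    unfold rz
    rw [show 1 - ρ ^ 2 = ρ ^ 2 by rw [hr2]; norm_num, Real.sqrt_sq h0]
  unfold Htilde
  rw [hrz, ← pow_two, hr2, hv, hv', ← hs]
  generalize Complex.exp (-(Complex.I * (k : ℂ))) = x
  generalize Complex.exp (Complex.I * (k : ℂ)) = y
  have hsI : (s * Complex.I) ^ 2 = -1 := by rw [mul_pow, hss, hI, one_mul]
  ext i j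
  fin_cases i <;> fin_cases j <;> simp
  · linear_combination 1 / 2 * x * hsI
  · linear_combination 1 / 2 * x * hsI
  · linear_combination 1 / 2 * y * hsI
  · linear_combination 1 / 2 * y * hsI

end
end
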